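/- arXiv:2510.15323 — 2 statements merged into one kernel-verified Lean document; each statement's English description precedes it below -/
import Mathlib

section
/- Let $(\mathcal X_i)_{i\in\mathbb Z}$ be measurable spaces and let $(X_i)_{i\in\mathbb Z}$ be a time-inhomogeneous Markov chain, $X_i$ taking values in $\mathcal X_i$, with one-step transition probabilities $P_i(x,\cdot)$ from $\mathcal X_i$ to $\mathcal X_{i+1}$ and $n$-step transition probabilities $P_{i,n}=P_i\circ P_{i+1}\circ\cdots\circ P_{i+n-1}$ from $\mathcal X_i$ to $\mathcal X_{i+n}$. Suppose that there are positive integers $\ell_j$, real numbers $\gamma_i$ and probability measures $m_j$ on $\mathcal X_j$ such that for every $j\in\mathbb Z$ we have $\gamma_{j-\ell_j}\in(0,1)$ and $$P_{j-\ell_j,\ell_j}(x,\Gamma)\ge \gamma_{j-\ell_j}\,m_j(\Gamma)\qquad\text{for all }x\in\mathcal X_{j-\ell_j}\text{ and all measurable }\Gamma\subseteq\mathcal X_j .$$ Define $N_{j,0}=0$ and $N_{j,k}=N_{j,k-1}+\ell_{j-1-N_{j,k-1}}$ for $k\ge1$; thus $N_{j,1}=\ell_{j-1}$ and $N_{j,2}=\ell_{j-1}+\ell_{j-1-\ell_{j-1}}$.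 Then there are finite positive measures $A_{j,n}$ on $\mathcal X_j$, nondecreasing in $n$, such that for all $j\in\mathbb Z$, all $m\ge1$ and all $n>N_{j,m-1}$, $$\sup_{\Gamma}\sup_{x}\left|P_{j-n,n}(x,\Gamma)-A_{j,n}(\Gamma)\right|\le\prod_{k=1}^{m-1}\left(1-\gamma_{j-1-N_{j,k}}\right),$$ where the suprema are over measurable $\Gamma\subseteq\mathcal X_j$ and $x\in\mathcal X_{j-n}$. Consequently, for every $j$ such that $\prod_{k=1}^{m-1}(1-\gamma_{j-1-N_{j,k}})\to0$ as $m\to\infty$, there exists a probability measure $\mu_j$ on $\mathcal X_j$ such that for all $m\ge1$ and all $n>N_{j,m-1}$, $$\sup_{\Gamma}\sup_{x}\left|P_{j-n,n}(x,\Gamma)-\mu_j(\Gamma)\right|\le\prod_{k=1}^{m-1}\left(1-\gamma_{j-1-N_{j,k}}\right).$$ -/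
open MeasureTheory ProbabilityTheory Filter

/-- Transport along an equality of time indices. -/
def castX {𝒳 : ℤ → Type*} {a b : ℤ} (h : a = b) (x : 𝒳 a) : 𝒳 b := h ▸ x

lemma measurable_castX {𝒳 : ℤ → Type*} [∀ i, MeasurableSpace (𝒳 i)] {a b : ℤ} (h : a = b) :
    Measurable (castX (𝒳 := 𝒳) h) := by
  subst h
  exact measurable_id

/-- The `n`-step transition kernel `P_{i,n} = P_i ∘ P_{i+1} ∘ ⋯ ∘ P_{i+n-1}` (composition as
operators on functions) from time `i` to time `j = i + n`; as kernels,
`P_{i,n+1}(x, Γ) = ∫ P_{i+1,n}(y, Γ) P_i(x, dy)`, and `P_{i,0}(x, ·)` is the Dirac mass at `x`.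
The final time `j` is a separate argument, so that `P_{j-n,n}` is a kernel into `𝒳 j` itself. -/
noncomputable def nstep {𝒳 : ℤ → Type*} [∀ i, MeasurableSpace (𝒳 i)]
    (P : ∀ i : ℤ, Kernel (𝒳 i) (𝒳 (i + 1))) :
    (n : ℕ) → (i j : ℤ) → i + (n : ℤ) = j → Kernel (𝒳 i) (𝒳 j)
  | 0, i, j, h =>
      Kernel.deterministic (castX (𝒳 := 𝒳) (show i = j by simpa using h)) (measurable_castX _)
  | n + 1, i, j, h =>
      nstep P n (i + 1) j (by rw [← h]; push_cast; ring) ∘ₖ P i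

/-- The kernel `P_{j-n,n}` from time `j - n` to time `j`. -/
noncomputable def nstepTo {𝒳 : ℤ → Type*} [∀ i, MeasurableSpace (𝒳 i)]
    (P : ∀ i : ℤ, Kernel (𝒳 i) (𝒳 (i + 1))) (n : ℕ) (j : ℤ) :
    Kernel (𝒳 (j - (n : ℤ))) (𝒳 j) :=
  nstep P n (j - n) j (sub_add_cancel _ _)

/-- The total length `N_{j,k}` of the first `k` consecutive minorization blocks counted backwards
from time `j - 1`: `N_{j,0} = 0` and `N_{j,k+1} = N_{j,k} + ℓ_{j-1-N_{j,k}}`.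
The `k`-th block (`k ≥ 1`) runs from time `j - 1 - N_{j,k}` to time `j - 1 - N_{j,k-1}`. -/
def blockTime (ℓ : ℤ → ℕ) (j : ℤ) : ℕ → ℕ
  | 0 => 0
  | k + 1 => blockTime ℓ j k + ℓ (j - 1 - (blockTime ℓ j k : ℤ))

/-!
A kernel that dominates `c • m` is, up to a kernel of mass `1 - c`, constant. Hence, if every
`η y` dominates `ν` and every `κ x` dominates `c • m`, then every `(η ∘ₖ κ) x` dominates
`c • (η ∘ₘ m) + (1 - c) • ν`, whose defect of mass is `1 - c` times that of `ν`. Going back in time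
through the minorization blocks before time `j - 1`, one obtains measures `A₀ ≤ A₁ ≤ ⋯` on `𝒳 j`
such that `Aₖ` has mass `1 - ∏_{i ≤ k} (1 - γ_{j-1-N_{j,i}})` and lies below every transition
probability that starts before the first `k` blocks. Two measures of mass at most `1` which both
dominate `Aₖ` differ on any set by at most `1 - Aₖ(𝒳 j)`. In this way `P_{j-n,n}(x, ·)` is compared
with `Aₙ`, where `k ≤ n` because every block has positive length, and with `⨆ k, Aₖ`, which is a
probability measure when the products tend to `0`.
-/

section Measures

variable {α : Type*} [MeasurableSpace α]

lemma abs_measureReal_sub_le_of_le_of_le {ρ μ ν : Measure α} [IsFiniteMeasure μ]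
    [IsFiniteMeasure ν] {r : ℝ} (hρμ : ρ ≤ μ) (hρν : ρ ≤ ν) (hμ : μ.real Set.univ ≤ r)
    (hν : ν.real Set.univ ≤ r) {s : Set α} (hs : MeasurableSet s) :
    |μ.real s - ν.real s| ≤ r - ρ.real Set.univ := by
  have : IsFiniteMeasure ρ := isFiniteMeasure_of_le μ hρμ
  have le_μ (t : Set α) : ρ.real t ≤ μ.real t := ENNReal.toReal_mono (measure_ne_top _ _) (hρμ t)
  have le_ν (t : Set α) : ρ.real t ≤ ν.real t := ENNReal.toReal_mono (measure_ne_top _ _) (hρν t)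
  rw [← measureReal_add_measureReal_compl hs] at hμ hν ⊢
  rw [abs_sub_le_iff]
  constructor <;> linarith [le_μ s, le_μ sᶜ, le_ν s, le_ν sᶜ]

lemma smul_le_of_forall_mul_measureReal_le {μ ν : Measure α} [IsFiniteMeasure μ]
    [IsFiniteMeasure ν] {c : NNReal}
    (h : ∀ s, MeasurableSet s → c * μ.real s ≤ ν.real s) : c • μ ≤ ν := by
  refine Measure.le_iff.2 fun s hs => ?_
  rw [← ENNReal.toReal_le_toReal (measure_ne_top _ _) (measure_ne_top _ _)]
  simpa only [← measureReal_def, measureReal_nnreal_smul_apply] using h s hs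

lemma iSup_measure_apply_of_monotone {ι : Type*} [Preorder ι] [IsDirectedOrder ι]
    {A : ι → Measure α} (hA : Monotone A) {s : Set α} (hs : MeasurableSet s) :
    (⨆ k, A k) s = ⨆ k, A k s := by
  let μ : Measure α := Measure.ofMeasurable (fun s _ => ⨆ k, A k s) (by simp) fun f hf hdisj => by
    simp_rw [measure_iUnion hdisj hf, ENNReal.tsum_eq_iSup_sum]
    rw [iSup_comm]
    exact iSup_congr fun t =>
      (ENNReal.finsetSum_iSup_of_monotone fun i k l hkl => hA hkl (f i)).symm
  have μ_apply {t : Set α} (ht : MeasurableSet t) : μ t = ⨆ k, A k t :=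
    Measure.ofMeasurable_apply t ht
  refine le_antisymm ?_ (iSup_le fun k => le_iSup A k s)
  rw [← μ_apply hs]
  refine iSup_le (fun k => Measure.le_iff.2 fun t ht => ?_) s
  rw [μ_apply ht]
  exact le_iSup (fun k => A k t) k

lemma isProbabilityMeasure_iSup_of_tendsto {A : ℕ → Measure α} [∀ k, IsFiniteMeasure (A k)]
    (hA : Monotone A) (hlim : Tendsto (fun k => (A k).real Set.univ) atTop (nhds 1)) :
    IsProbabilityMeasure (⨆ k, A k) := by
  refine ⟨?_⟩
  rw [iSup_measure_apply_of_monotone hA MeasurableSet.univ]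
  refine iSup_eq_of_tendsto (fun k l hkl => hA hkl Set.univ) ?_
  simpa using ENNReal.tendsto_ofReal hlim

end Measures

section Doeblin

open unitInterval

variable {α β δ : Type*} [MeasurableSpace α] [MeasurableSpace β] [MeasurableSpace δ]

lemma measure_univ_smul_le_comp {μ : Measure β} {ν : Measure δ} {η : Kernel β δ}
    (hη : ∀ y, ν ≤ η y) : μ Set.univ • ν ≤ η ∘ₘ μ := by
  refine Measure.le_iff.2 fun s hs => ?_
  rw [Measure.bind_apply hs η.aemeasurable, Measure.smul_apply, smul_eq_mul, mul_comm,
    ← lintegral_const]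
  exact lintegral_mono fun y => hη y s

lemma le_comp_of_forall_le {μ : Measure β} [IsProbabilityMeasure μ] {ν : Measure δ}
    {η : Kernel β δ} (hη : ∀ y, ν ≤ η y) : ν ≤ η ∘ₘ μ := by
  simpa using measure_univ_smul_le_comp (μ := μ) hη

/-- The lower bound for `η ∘ₖ κ` obtained from a lower bound `ν` for `η` and a Doeblin minorization
`c • m` of `κ`. -/
noncomputable def doeblinStep (c : I) (m : Measure β) (η : Kernel β δ) (ν : Measure δ) :
    Measure δ :=
  toNNReal c • (η ∘ₘ m) + toNNReal (σ c) • ν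

section Step

variable {c : I} {m : Measure β} {η : Kernel β δ} {ν : Measure δ}

instance [IsFiniteMeasure m] [IsFiniteKernel η] [IsFiniteMeasure ν] :
    IsFiniteMeasure (doeblinStep c m η ν) := by
  unfold doeblinStep
  infer_instance

lemma doeblinStep_le_comp {κ : Kernel α β} [IsMarkovKernel κ] [IsProbabilityMeasure m] {x : α}
    (hκ : toNNReal c • m ≤ κ x) (hη : ∀ y, ν ≤ η y) :
    doeblinStep c m η ν ≤ (η ∘ₖ κ) x := by
  have residual_univ : (κ x - toNNReal c • m) Set.univ = toNNReal (σ c) := by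
    rw [Measure.sub_apply MeasurableSet.univ hκ, measure_univ, Measure.smul_apply, measure_univ,
      ENNReal.smul_def, smul_eq_mul, mul_one, ← ENNReal.coe_one, ← toNNReal_add_toNNReal_symm c,
      ENNReal.coe_add, ENNReal.add_sub_cancel_left ENNReal.coe_ne_top]
  calc doeblinStep c m η ν
      = η ∘ₘ (toNNReal c • m) + (κ x - toNNReal c • m) Set.univ • ν := by
        rw [residual_univ]
        exact congrArg (· + _) (Measure.comp_smul _).symm
    _ ≤ η ∘ₘ (toNNReal c • m) + η ∘ₘ (κ x - toNNReal c • m) := by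
        gcongr
        exact measure_univ_smul_le_comp hη
    _ = (η ∘ₖ κ) x := by
        rw [← Measure.comp_add, add_comm, Measure.sub_add_cancel_of_le hκ, Kernel.comp_apply]

lemma le_doeblinStep [IsProbabilityMeasure m] (hη : ∀ y, ν ≤ η y) :
    ν ≤ doeblinStep c m η ν :=
  calc ν = toNNReal c • ν + toNNReal (σ c) • ν := by
        rw [← add_smul, toNNReal_add_toNNReal_symm, one_smul]
    _ ≤ doeblinStep c m η ν := by
        unfold doeblinStep
        gcongr
        exact le_comp_of_forall_le hη

lemma one_sub_doeblinStep_univ [IsProbabilityMeasure m] [IsMarkovKernel η] [IsFiniteMeasure ν] :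
    1 - (doeblinStep c m η ν).real Set.univ = (1 - c) * (1 - ν.real Set.univ) := by
  rw [doeblinStep, measureReal_add_apply, measureReal_nnreal_smul_apply,
    measureReal_nnreal_smul_apply, probReal_univ, coe_toNNReal, coe_toNNReal, coe_symm_eq]
  ring

end Step

variable {E : ℕ → Type*} [∀ k, MeasurableSpace (E k)] (c : ℕ → I) (m : ∀ k, Measure (E k))
  (η : ∀ k, Kernel (E k) δ)

/-- The lower bound for `η k` obtained by `k` Doeblin steps, where `η k` leads from the state space
`k` blocks in the past to the present one, and the block from `E (k + 1)` to `E k` is minorized by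
`c k • m k`. -/
noncomputable def doeblinMinorant : ℕ → Measure δ
  | 0 => 0
  | k + 1 => doeblinStep (c k) (m k) (η k) (doeblinMinorant k)

instance [∀ k, IsFiniteMeasure (m k)] [∀ k, IsFiniteKernel (η k)] (k : ℕ) :
    IsFiniteMeasure (doeblinMinorant c m η k) := by
  induction k with
  | zero => rw [doeblinMinorant]; infer_instance
  | succ k ih => rw [doeblinMinorant]; infer_instance

lemma doeblinMinorant_univ [∀ k, IsProbabilityMeasure (m k)] [∀ k, IsMarkovKernel (η k)]
    (k : ℕ) :
    (doeblinMinorant c m η k).real Set.univ = 1 - ∏ i ∈ Finset.range k, (1 - (c i : ℝ)) := by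
  suffices 1 - (doeblinMinorant c m η k).real Set.univ = ∏ i ∈ Finset.range k, (1 - (c i : ℝ)) by
    linarith
  induction k with
  | zero => simp [doeblinMinorant]
  | succ k ih =>
    rw [doeblinMinorant, one_sub_doeblinStep_univ, ih, Finset.prod_range_succ, mul_comm]

lemma doeblinMinorant_univ_le_one [∀ k, IsProbabilityMeasure (m k)] [∀ k, IsMarkovKernel (η k)]
    (k : ℕ) : (doeblinMinorant c m η k).real Set.univ ≤ 1 := by
  rw [doeblinMinorant_univ]
  exact sub_le_self _ (Finset.prod_nonneg fun i _ => one_minus_nonneg (c i))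

variable {c m η} [∀ k, IsProbabilityMeasure (m k)] {κ : ∀ k, Kernel (E (k + 1)) (E k)}
  [∀ k, IsMarkovKernel (κ k)]

lemma doeblinMinorant_le (hη : ∀ k, η (k + 1) = η k ∘ₖ κ k)
    (hκ : ∀ k x, toNNReal (c k) • m k ≤ κ k x) (k : ℕ) (x : E k) :
    doeblinMinorant c m η k ≤ η k x := by
  induction k with
  | zero => exact Measure.zero_le _
  | succ k ih => rw [hη]; exact doeblinStep_le_comp (hκ k x) ih

lemma doeblinMinorant_monotone (hη : ∀ k, η (k + 1) = η k ∘ₖ κ k)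
    (hκ : ∀ k x, toNNReal (c k) • m k ≤ κ k x) : Monotone (doeblinMinorant c m η) :=
  monotone_nat_of_le_succ fun k => le_doeblinStep (doeblinMinorant_le hη hκ k)

end Doeblin

section Blocks

variable {ℓ : ℤ → ℕ}

lemma le_blockTime (hℓ : ∀ j, 1 ≤ ℓ j) (j : ℤ) (k : ℕ) : k ≤ blockTime ℓ j k := by
  induction k with
  | zero => exact Nat.zero_le _
  | succ k ih => exact Nat.add_le_add ih (hℓ _)

variable (ℓ) in
/-- The time `j - 1 - N_{j,k}` at which the `k`-th minorization block before time `j - 1` starts;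
it is `j - 1` itself for `k = 0`. -/
def blockStart (j : ℤ) (k : ℕ) : ℤ := j - 1 - blockTime ℓ j k

lemma blockStart_succ (j : ℤ) (k : ℕ) :
    blockStart ℓ j (k + 1) = blockStart ℓ j k - ℓ (blockStart ℓ j k) := by
  rw [blockStart, blockTime, Nat.cast_add, ← sub_sub]
  rfl

lemma blockStart_succ_le (j : ℤ) (k : ℕ) : blockStart ℓ j (k + 1) ≤ blockStart ℓ j k := by
  rw [blockStart_succ]
  exact sub_le_self _ (Nat.cast_nonneg _)

lemma blockStart_le (j : ℤ) (k : ℕ) : blockStart ℓ j k ≤ j := by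
  unfold blockStart
  omega

end Blocks

section Chain

open unitInterval

variable {𝒳 : ℤ → Type*} [∀ i, MeasurableSpace (𝒳 i)] (P : ∀ i : ℤ, Kernel (𝒳 i) (𝒳 (i + 1)))

/-- The transition kernel from time `i` to time `j`, that is, `P_{i,j-i}`. -/
noncomputable def transition {i j : ℤ} (hij : i ≤ j) : Kernel (𝒳 i) (𝒳 j) :=
  nstep P (j - i).toNat i j (by omega)

lemma nstep_eq_transition {n : ℕ} {i j : ℤ} (h : i + (n : ℤ) = j) :
    nstep P n i j h = transition P (by omega) := by
  obtain rfl : n = (j - i).toNat := by omega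
  rfl

instance isMarkovKernel_nstep [∀ i, IsMarkovKernel (P i)] (n : ℕ) {i j : ℤ}
    (h : i + (n : ℤ) = j) : IsMarkovKernel (nstep P n i j h) := by
  induction n generalizing i with
  | zero => rw [nstep]; infer_instance
  | succ n ih => rw [nstep]; infer_instance

instance [∀ i, IsMarkovKernel (P i)] (n : ℕ) (j : ℤ) : IsMarkovKernel (nstepTo P n j) :=
  isMarkovKernel_nstep P _ _

instance [∀ i, IsMarkovKernel (P i)] {i j : ℤ} (hij : i ≤ j) :
    IsMarkovKernel (transition P hij) :=
  isMarkovKernel_nstep P _ _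

lemma nstep_comp_nstep {a b : ℕ} {i j k : ℤ} (ha : i + (a : ℤ) = j) (hb : j + (b : ℤ) = k) :
    nstep P b j k hb ∘ₖ nstep P a i j ha = nstep P (b + a) i k (by omega) := by
  induction a generalizing i with
  | zero =>
    obtain rfl : i = j := by simpa using ha
    exact Kernel.comp_id _
  | succ a ih =>
    rw [nstep, ← Kernel.comp_assoc, ih]
    rfl

lemma transition_comp_transition {i j k : ℤ} (hij : i ≤ j) (hjk : j ≤ k) :
    transition P hjk ∘ₖ transition P hij = transition P (hij.trans hjk) := by
  rw [transition, transition, nstep_comp_nstep, nstep_eq_transition]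

variable {P} [∀ i, IsMarkovKernel (P i)]

lemma smul_le_transition {n : ℕ} {i j : ℤ} (hi : i = j - n) {c : NNReal} {μ : Measure (𝒳 j)}
    [IsFiniteMeasure μ]
    (h : ∀ (x : 𝒳 (j - (n : ℤ))) (Γ : Set (𝒳 j)), MeasurableSet Γ →
      c * μ.real Γ ≤ (nstepTo P n j x).real Γ) (x : 𝒳 i) :
    c • μ ≤ transition P (show i ≤ j by omega) x := by
  subst hi
  rw [← nstep_eq_transition P (sub_add_cancel j (n : ℤ))]
  exact smul_le_of_forall_mul_measureReal_le (h x)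

lemma exists_monotone_minorants {ℓ : ℤ → ℕ} {γ : ℤ → ℝ} (hγ : ∀ j, γ (j - (ℓ j : ℤ)) ∈ I)
    {m : ∀ j : ℤ, Measure (𝒳 j)} [∀ j, IsProbabilityMeasure (m j)]
    (hminor : ∀ (j : ℤ) (x : 𝒳 (j - (ℓ j : ℤ))) (Γ : Set (𝒳 j)), MeasurableSet Γ →
      γ (j - (ℓ j : ℤ)) * (m j).real Γ ≤ (nstepTo P (ℓ j) j x).real Γ) (j : ℤ) :
    ∃ A : ℕ → Measure (𝒳 j), (∀ k, IsFiniteMeasure (A k)) ∧ Monotone A ∧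
      (∀ k, (A k).real Set.univ ≤ 1) ∧
      (∀ k, (A k).real Set.univ =
        1 - ∏ i ∈ Finset.Icc 1 k, (1 - γ (j - 1 - (blockTime ℓ j i : ℤ)))) ∧
      ∀ k n : ℕ, blockTime ℓ j k < n → ∀ x, A k ≤ nstepTo P n j x := by
  let c (k : ℕ) : I := ⟨γ (blockStart ℓ j k - ℓ (blockStart ℓ j k)), hγ _⟩
  let η (k : ℕ) := transition P (blockStart_le (ℓ := ℓ) j k)
  let κ (k : ℕ) := transition P (blockStart_succ_le (ℓ := ℓ) j k)
  have hη (k : ℕ) : η (k + 1) = η k ∘ₖ κ k := (transition_comp_transition P _ _).symm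
  have hκ (k : ℕ) (x) : toNNReal (c k) • m (blockStart ℓ j k) ≤ κ k x :=
    smul_le_transition (blockStart_succ j k) (hminor _) x
  refine ⟨doeblinMinorant c (fun k => m (blockStart ℓ j k)) η, inferInstance,
    doeblinMinorant_monotone hη hκ, doeblinMinorant_univ_le_one c _ η, fun k => ?_,
    fun k n hn x => ?_⟩
  · simp only [doeblinMinorant_univ, c, ← blockStart_succ]
    rw [Finset.range_eq_Ico, Finset.prod_Ico_add' (fun i => 1 - γ (blockStart ℓ j i)) 0 k 1]
    rfl
  · have hstart : j - n ≤ blockStart ℓ j k := by unfold blockStart; omega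
    rw [nstepTo, nstep_eq_transition, ← transition_comp_transition P hstart (blockStart_le j k),
      Kernel.comp_apply]
    exact le_comp_of_forall_le (doeblinMinorant_le hη hκ k)

end Chain

/-- Mixing under a general sequential minorization condition. -/
theorem sequential_minorization_mixing
    {𝒳 : ℤ → Type*} [∀ i, MeasurableSpace (𝒳 i)]
    (P : ∀ i : ℤ, Kernel (𝒳 i) (𝒳 (i + 1))) (hP : ∀ i, IsMarkovKernel (P i))
    (ℓ : ℤ → ℕ) (hℓ : ∀ j, 1 ≤ ℓ j)
    (γ : ℤ → ℝ) (hγ : ∀ j, γ (j - (ℓ j : ℤ)) ∈ Set.Ioo (0 : ℝ) 1)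
    (m : ∀ j : ℤ, Measure (𝒳 j)) (hm : ∀ j, IsProbabilityMeasure (m j))
    (hminor : ∀ (j : ℤ) (x : 𝒳 (j - (ℓ j : ℤ))) (Γ : Set (𝒳 j)), MeasurableSet Γ →
      γ (j - (ℓ j : ℤ)) * (m j).real Γ ≤ (nstepTo P (ℓ j) j x).real Γ) :
    (∃ A : ∀ j : ℤ, ℕ → Measure (𝒳 j),
      (∀ j n, IsFiniteMeasure (A j n)) ∧
      (∀ j, Monotone (A j)) ∧
      ∀ (j : ℤ) (M : ℕ), 1 ≤ M → ∀ n : ℕ, blockTime ℓ j (M - 1) < n →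
        ∀ (Γ : Set (𝒳 j)), MeasurableSet Γ → ∀ x : 𝒳 (j - (n : ℤ)),
          |(nstepTo P n j x).real Γ - (A j n).real Γ|
            ≤ ∏ k ∈ Finset.Icc 1 (M - 1), (1 - γ (j - 1 - (blockTime ℓ j k : ℤ)))) ∧
    (∀ j : ℤ,
      Tendsto (fun M : ℕ => ∏ k ∈ Finset.Icc 1 (M - 1),
        (1 - γ (j - 1 - (blockTime ℓ j k : ℤ)))) atTop (nhds 0) →
      ∃ μ : Measure (𝒳 j), IsProbabilityMeasure μ ∧
        ∀ M : ℕ, 1 ≤ M → ∀ n : ℕ, blockTime ℓ j (M - 1) < n →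
          ∀ (Γ : Set (𝒳 j)), MeasurableSet Γ → ∀ x : 𝒳 (j - (n : ℤ)),
            |(nstepTo P n j x).real Γ - μ.real Γ|
              ≤ ∏ k ∈ Finset.Icc 1 (M - 1), (1 - γ (j - 1 - (blockTime ℓ j k : ℤ)))) := by
  choose A hfin hmono hmass_le hmass hle using
    exists_monotone_minorants (m := m) (fun j => Set.Ioo_subset_Icc_self (hγ j)) hminor
  have bound {j : ℤ} {B : Measure (𝒳 j)} [IsFiniteMeasure B] (hB : B.real Set.univ ≤ 1) {k n : ℕ}
      (hkB : A j k ≤ B) (hn : blockTime ℓ j k < n) {Γ : Set (𝒳 j)} (hΓ : MeasurableSet Γ)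
      (x : 𝒳 (j - (n : ℤ))) : |(nstepTo P n j x).real Γ - B.real Γ|
        ≤ ∏ i ∈ Finset.Icc 1 k, (1 - γ (j - 1 - (blockTime ℓ j i : ℤ))) := by
    have h := abs_measureReal_sub_le_of_le_of_le (hle j k n hn x) hkB probReal_univ.le hB hΓ
    rwa [hmass, sub_sub_cancel] at h
  refine ⟨⟨A, hfin, hmono, fun j M _ n hn Γ hΓ x => ?_⟩, fun j hlim => ?_⟩
  · exact bound (hmass_le j n) (hmono j ((le_blockTime hℓ j _).trans hn.le)) hn hΓ x
  · have hμ : IsProbabilityMeasure (⨆ k, A j k) :=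
      isProbabilityMeasure_iSup_of_tendsto (hmono j) <| by
        simpa [hmass] using (hlim.comp (tendsto_add_atTop_nat 1)).const_sub 1
    exact ⟨_, hμ, fun M _ n hn Γ hΓ x => bound probReal_univ.le (le_iSup (A j) _) hn hΓ x⟩
end

section
/- Let $(X_j)_{j\ge 0}$ be a (possibly time-inhomogeneous) Markov chain, $X_j$ taking values in a measurable space $\mathcal X_j$, which satisfies the uniform Doeblin minorization condition: there are $n_0\in\mathbb N$, $n_0\ge 1$, $\gamma\in(0,1)$ and probability measures $m_j$ on $\mathcal X_j$ such that the $n_0$-step transition probabilities satisfy $P_{j,n_0}(x,\Gamma)=\mathbb P(X_{j+n_0}\in\Gamma\mid X_j=x)\ge \gamma\, m_{j+n_0}(\Gamma)$ for all $j\ge 0$, all $x\in\mathcal X_j$ and all measurable $\Gamma\subseteq\mathcal X_{j+n_0}$. Let $f_j:\mathcal X_j\to\mathbb R$ be measurable functions with $\sup_j\|f_j(X_j)\|_{L^\infty}<\infty$, and put $S_n=\sum_{j=0}^{n-1}f_j(X_j)$ and $\sigma_n=\sqrt{\mathrm{Var}(S_n)}$. Suppose that $\sigma_n\to\infty$. Then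 there are $\delta_0>0$ and, for every $n$, a smooth branch $\Lambda_n:(-\delta_0,\delta_0)\to\mathbb C$ of $\ln\mathbb E\big[e^{it(S_n-\mathbb E[S_n])}\big]$ with $\Lambda_n(0)=0$, such that for every $k\ge 3$ there are constants $\delta_k\in(0,\delta_0)$ and $C_k>0$ with $$\sup_{t\in[-\delta_k,\delta_k]}\big|\Lambda_n^{(s)}(t)\big|\le C_k\,\sigma_n^2\qquad\text{for all } n \text{ and all } 0\le s\le k .$$ -/
open MeasureTheory ProbabilityTheory Filter

noncomputable section

/-- The σ-algebra generated by `X 0, …, X j`. -/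
abbrev pastSigma {Ω : Type*} {𝒳 : ℕ → Type*} [∀ j, MeasurableSpace (𝒳 j)]
    (X : ∀ j, Ω → 𝒳 j) (j : ℕ) : MeasurableSpace Ω :=
  ⨆ i ∈ Set.Iic j, MeasurableSpace.comap (X i) inferInstance

/-- The `n`-step transition probabilities from time `j` obtained by composing the one-step
transition probabilities `P j, P (j + 1), …, P (j + n - 1)`. -/
def stepKernel {𝒳 : ℕ → Type*} [∀ j, MeasurableSpace (𝒳 j)]
    (P : ∀ j, Kernel (𝒳 j) (𝒳 (j + 1))) (j : ℕ) : ∀ n : ℕ, Kernel (𝒳 j) (𝒳 (j + n))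
  | 0 => Kernel.id
  | n + 1 => P (j + n) ∘ₖ stepKernel P j n

/-- `X` is a (time-inhomogeneous) Markov chain on `(Ω, μ)` with one-step transition
probabilities `P j`: almost surely
`ℙ(X (j + 1) ∈ Γ | X 0, …, X j) = P j (X j) Γ` for every `j` and every measurable `Γ`. -/
structure IsMarkovChain {Ω : Type*} [MeasurableSpace Ω] {𝒳 : ℕ → Type*}
    [∀ j, MeasurableSpace (𝒳 j)] (μ : Measure Ω) (X : ∀ j, Ω → 𝒳 j)
    (P : ∀ j, Kernel (𝒳 j) (𝒳 (j + 1))) : Prop where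
  measurable : ∀ j, Measurable (X j)
  isMarkovKernel : ∀ j, IsMarkovKernel (P j)
  condProb : ∀ j (Γ : Set (𝒳 (j + 1))), MeasurableSet Γ →
    μ⟦X (j + 1) ⁻¹' Γ | pastSigma X j⟧ =ᵐ[μ] fun ω => (P j (X j ω)).real Γ

/-- The uniform Doeblin minorization condition after `n₀` steps, with constant `γ` and
minorizing measures `m j`. -/
def DoeblinMinorization {𝒳 : ℕ → Type*} [∀ j, MeasurableSpace (𝒳 j)]
    (P : ∀ j, Kernel (𝒳 j) (𝒳 (j + 1))) (n₀ : ℕ) (γ : ℝ) (m : ∀ j, Measure (𝒳 j)) : Prop :=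
  ∀ j (x : 𝒳 j) (Γ : Set (𝒳 (j + n₀))), MeasurableSet Γ →
    γ * (m (j + n₀)).real Γ ≤ (stepKernel P j n₀ x).real Γ

/-- The partial sum `S_n = f_0(X_0) + ⋯ + f_{n-1}(X_{n-1})`. -/
def partialSum {Ω : Type*} {𝒳 : ℕ → Type*} (X : ∀ j, Ω → 𝒳 j) (f : ∀ j, 𝒳 j → ℝ)
    (n : ℕ) (ω : Ω) : ℝ :=
  ∑ j ∈ Finset.range n, f j (X j ω)

/-- The characteristic function `t ↦ E[exp (i t (Z - E[Z]))]` of the centering of `Z`. -/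
def centeredCharFun {Ω : Type*} [MeasurableSpace Ω] (μ : Measure Ω) (Z : Ω → ℝ) (t : ℝ) : ℂ :=
  ∫ ω, Complex.exp (Complex.I * (t : ℂ) * ((Z ω - ∫ ω', Z ω' ∂μ : ℝ) : ℂ)) ∂μ

end

/-!
The sum `S_n - E S_n` is a sum of bounded martingale differences `D_k`, taken from the solution
`g_j(x) = E[f_j(X_j) + ⋯ + f_{n-1}(X_{n-1}) | X_j = x]` of Poisson's equation, whose oscillation is
bounded by the Doeblin condition. With `F_j(z) = E[exp (z (D_j + ⋯ + D_{n-1}))]` one has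
`E[exp (z (S_n - E S_n))] = ∏ F_j / F_{j+1}`, so it suffices that
`∑ |F_j / F_{j+1} - 1| ≤ 2 Var S_n` with each term at most `1/2`, for `z` in a disc independent of
`n`: then `∑ log (F_j / F_{j+1})` is a holomorphic branch bounded by `3 Var S_n`, and Cauchy's
estimates bound its derivatives.

Write `E[exp (z (D_{j+1} + ⋯ + D_{n-1})) | X_j] = F_{j+1} (1 + V_j)`. Then
`F_j / F_{j+1} - 1 = E[(exp (z D_j) - 1) (1 + V_j)]`, which is at most
`2 ‖z D_j‖₂² + ‖V_j‖₂²` because `E D_j = 0`. The centred variables `V_j` satisfy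
`V_j = E[V_{j+1} | X_j] + O(|z| (‖D_{j+1}‖₂ + ‖V_{j+1}‖₂))` in `L²`, and `n₀` steps of the chain
contract centred functions by the factor `√(1 - γ)` in `L²`. For small `z` this recursion yields
`∑ ‖V_j‖₂² ≤ ∑ ‖D_j‖₂² = Var S_n`.
-/

/-- Bounded strongly measurable functions: the class of integrands for which every integral
below exists. -/
structure BddMeas {α E : Type*} [MeasurableSpace α] [NormedAddCommGroup E] (u : α → E) : Prop where
  stronglyMeasurable : StronglyMeasurable u
  bdd : ∃ C, ∀ x, ‖u x‖ ≤ C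

namespace BddMeas

variable {α β E : Type*} {mα : MeasurableSpace α} {mβ : MeasurableSpace β} [NormedAddCommGroup E]

lemma const (c : E) : BddMeas (fun _ : α => c) :=
  ⟨stronglyMeasurable_const, ‖c‖, fun _ => le_rfl⟩

lemma add {u v : α → E} (hu : BddMeas u) (hv : BddMeas v) : BddMeas (fun x => u x + v x) := by
  obtain ⟨hu, C, hC⟩ := hu
  obtain ⟨hv, C', hC'⟩ := hv
  exact ⟨hu.add hv, C + C', fun x => (norm_add_le _ _).trans (add_le_add (hC x) (hC' x))⟩

lemma neg {u : α → E} (hu : BddMeas u) : BddMeas (fun x => -u x) := by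
  obtain ⟨hu, C, hC⟩ := hu
  exact ⟨hu.neg, C, fun x => (norm_neg _).trans_le (hC x)⟩

lemma sub {u v : α → E} (hu : BddMeas u) (hv : BddMeas v) : BddMeas (fun x => u x - v x) := by
  simpa only [sub_eq_add_neg] using hu.add hv.neg

lemma mul {R : Type*} [NormedRing R] {u v : α → R} (hu : BddMeas u) (hv : BddMeas v) :
    BddMeas (fun x => u x * v x) := by
  obtain ⟨hu, C, hC⟩ := hu
  obtain ⟨hv, C', hC'⟩ := hv
  exact ⟨hu.mul hv, C * C', fun x => (norm_mul_le _ _).trans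
    (mul_le_mul (hC x) (hC' x) (norm_nonneg _) ((norm_nonneg _).trans (hC x)))⟩

lemma sum {ι : Type*} (s : Finset ι) {u : ι → α → E} (hu : ∀ i ∈ s, BddMeas (u i)) :
    BddMeas (fun x => ∑ i ∈ s, u i x) := by
  classical
  induction s using Finset.induction_on with
  | empty => simpa using const (0 : E)
  | insert a s ha ih =>
    simp only [Finset.sum_insert ha]
    exact (hu a (Finset.mem_insert_self a s)).add
      (ih fun i hi => hu i (Finset.mem_insert_of_mem hi))

lemma comp {u : β → E} (hu : BddMeas u) {g : α → β} (hg : Measurable g) :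
    BddMeas (fun x => u (g x)) := by
  obtain ⟨hu, C, hC⟩ := hu
  exact ⟨hu.comp_measurable hg, C, fun x => hC _⟩

lemma norm_sq {u : α → E} (hu : BddMeas u) : BddMeas (fun x => ‖u x‖ ^ 2) := by
  obtain ⟨hu, C, hC⟩ := hu
  refine ⟨hu.norm.pow 2, C ^ 2, fun x => ?_⟩
  rw [norm_pow, norm_norm]
  exact pow_le_pow_left₀ (norm_nonneg _) (hC x) 2

lemma ofReal {u : α → ℝ} (hu : BddMeas u) : BddMeas (fun x => (u x : ℂ)) := by
  obtain ⟨hu, C, hC⟩ := hu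
  exact ⟨Complex.continuous_ofReal.comp_stronglyMeasurable hu, C, fun x => by simpa using hC x⟩

lemma cexp {u : α → ℂ} (hu : BddMeas u) : BddMeas (fun x => Complex.exp (u x)) := by
  obtain ⟨hu, C, hC⟩ := hu
  refine ⟨Complex.continuous_exp.comp_stronglyMeasurable hu, Real.exp C, fun x => ?_⟩
  exact (Complex.norm_exp_le_exp_norm _).trans (Real.exp_le_exp.2 (hC x))

lemma memLp {u : α → E} (hu : BddMeas u) (μ : Measure α) [IsFiniteMeasure μ] (p : ENNReal) :
    MemLp u p μ := by
  obtain ⟨hu, C, hC⟩ := hu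
  exact MemLp.of_bound hu.aestronglyMeasurable C (ae_of_all _ hC)

lemma integrable {u : α → E} (hu : BddMeas u) (μ : Measure α) [IsFiniteMeasure μ] :
    Integrable u μ :=
  memLp_one_iff_integrable.1 (hu.memLp μ 1)

lemma kernel_prod [NormedSpace ℝ E] {u : α × β → E} (hu : BddMeas u) (κ : Kernel α β)
    [IsMarkovKernel κ] : BddMeas (fun x => ∫ y, u (x, y) ∂κ x) := by
  obtain ⟨hu, C, hC⟩ := hu
  refine ⟨hu.integral_kernel_prod_right', C, fun x => ?_⟩
  simpa using norm_integral_le_of_norm_le_const (μ := κ x) (ae_of_all _ fun y => hC (x, y))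

lemma kernel [NormedSpace ℝ E] {u : β → E} (hu : BddMeas u) (κ : Kernel α β)
    [IsMarkovKernel κ] : BddMeas (fun x => ∫ y, u y ∂κ x) :=
  kernel_prod (hu.comp measurable_snd) κ

end BddMeas

section Minorization

variable {α E : Type*} {mα : MeasurableSpace α} [NormedAddCommGroup E] [NormedSpace ℝ E]

lemma norm_integral_sq_le_measureReal_univ_mul {ν : Measure α} [IsFiniteMeasure ν] {u : α → E}
    (hu : BddMeas u) : ‖∫ x, u x ∂ν‖ ^ 2 ≤ ν.real Set.univ * ∫ x, ‖u x‖ ^ 2 ∂ν := by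
  set c := ν.real Set.univ
  set b := ∫ x, ‖u x‖ ∂ν
  have hnorm : ‖∫ x, u x ∂ν‖ ≤ b := norm_integral_le_integral_norm _
  have hsq : ∫ x, (c * ‖u x‖ - b) ^ 2 ∂ν = c * (c * (∫ x, ‖u x‖ ^ 2 ∂ν) - b ^ 2) := by
    have hu₁ : Integrable (fun x => ‖u x‖) ν := (hu.integrable ν).norm
    have hu₂ : Integrable (fun x => ‖u x‖ ^ 2) ν := hu.norm_sq.integrable ν
    have hexpand : ∀ x, (c * ‖u x‖ - b) ^ 2 = c ^ 2 * ‖u x‖ ^ 2 - 2 * c * b * ‖u x‖ + b ^ 2 :=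
      fun x => by ring
    simp_rw [hexpand]
    rw [integral_add (by fun_prop) (by fun_prop), integral_sub (by fun_prop) (by fun_prop),
      integral_const_mul, integral_const_mul, integral_const, smul_eq_mul]
    ring
  have hpos : 0 ≤ c * (c * (∫ x, ‖u x‖ ^ 2 ∂ν) - b ^ 2) :=
    hsq ▸ integral_nonneg fun x => sq_nonneg _
  rcases measureReal_nonneg.eq_or_lt with h0 | hc0
  · have hν : ν = 0 := Measure.measure_univ_eq_zero.1 ((measureReal_eq_zero_iff).1 h0.symm)
    simp [hν]
  · linarith [pow_le_pow_left₀ (norm_nonneg _) hnorm 2, nonneg_of_mul_nonneg_right hpos hc0]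

lemma norm_integral_sq_le_integral_norm_sq {ν : Measure α} [IsProbabilityMeasure ν] {u : α → E}
    (hu : BddMeas u) : ‖∫ x, u x ∂ν‖ ^ 2 ≤ ∫ x, ‖u x‖ ^ 2 ∂ν := by
  simpa using norm_integral_sq_le_measureReal_univ_mul (ν := ν) hu

lemma integral_sub_measure_of_le {κ ν : Measure α} [IsFiniteMeasure ν] (hκ : κ ≤ ν) {u : α → E}
    (hu : Integrable u ν) : ∫ x, u x ∂(ν - κ) = (∫ x, u x ∂ν) - ∫ x, u x ∂κ := by
  have : IsFiniteMeasure κ := isFiniteMeasure_of_le ν hκ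
  rw [eq_sub_iff_add_eq, ← integral_add_measure (hu.mono_measure Measure.sub_le)
    (hu.mono_measure hκ), Measure.sub_add_cancel_of_le hκ]

lemma measureReal_univ_sub_of_le {κ ν : Measure α} [IsProbabilityMeasure ν] (hκ : κ ≤ ν) :
    (ν - κ).real Set.univ = 1 - κ.real Set.univ := by
  simpa using integral_sub_measure_of_le hκ (integrable_const (1 : ℝ))

lemma measureReal_univ_ofReal_smul {ν : Measure α} [IsProbabilityMeasure ν] {c : ℝ} (hc : 0 ≤ c) :
    (ENNReal.ofReal c • ν).real Set.univ = c := by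
  simp [ENNReal.toReal_ofReal hc]

lemma integral_sub_integral_le_of_minorization {κ ν₁ ν₂ : Measure α} [IsProbabilityMeasure ν₁]
    [IsProbabilityMeasure ν₂] (h₁ : κ ≤ ν₁) (h₂ : κ ≤ ν₂) {u : α → ℝ} (hu : BddMeas u) {r : ℝ}
    (hr : ∀ x y, u x - u y ≤ r) :
    (∫ x, u x ∂ν₁) - ∫ x, u x ∂ν₂ ≤ (1 - κ.real Set.univ) * r := by
  have : Nonempty α := nonempty_of_isProbabilityMeasure ν₁
  have hbdd : BddBelow (Set.range u) := by
    obtain ⟨-, C, hC⟩ := hu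
    exact ⟨-C, Set.forall_mem_range.2 fun x => (abs_le.1 (hC x)).1⟩
  have hsup : ∀ x, u x ≤ (⨅ y, u y) + r := fun x => by
    linarith [le_ciInf fun y => sub_le_comm.1 (hr x y)]
  have hle := integral_mono (μ := ν₁ - κ) (hu.integrable _) (integrable_const _) hsup
  have hge := integral_mono (μ := ν₂ - κ) (integrable_const _) (hu.integrable _) (ciInf_le hbdd)
  simp only [integral_const, smul_eq_mul, measureReal_univ_sub_of_le h₁,
    measureReal_univ_sub_of_le h₂, integral_sub_measure_of_le h₁ (hu.integrable ν₁),
    integral_sub_measure_of_le h₂ (hu.integrable ν₂)] at hle hge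
  linarith

lemma norm_integral_sub_sq_le_of_minorization {κ ν : Measure α} [IsProbabilityMeasure ν]
    (hκ : κ ≤ ν) {u : α → E} (hu : BddMeas u) :
    ‖(∫ x, u x ∂ν) - ∫ x, u x ∂κ‖ ^ 2 ≤ (1 - κ.real Set.univ) * ∫ x, ‖u x‖ ^ 2 ∂ν := by
  rw [← integral_sub_measure_of_le hκ (hu.integrable ν), ← measureReal_univ_sub_of_le hκ]
  refine (norm_integral_sq_le_measureReal_univ_mul hu).trans ?_
  gcongr
  · exact ae_of_all _ fun x => sq_nonneg _
  · exact hu.norm_sq.integrable ν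
  · exact Measure.sub_le

end Minorization

section SecondMoment

variable {Ω E : Type*} {mΩ : MeasurableSpace Ω} [NormedAddCommGroup E] {μ : Measure Ω}

lemma lpNorm_congr_ae {p : ENNReal} {U V : Ω → E} (h : U =ᵐ[μ] V) :
    lpNorm U p μ = lpNorm V p μ := by
  classical
  rw [lpNorm, lpNorm, eLpNorm_congr_ae h]
  exact if_congr (aestronglyMeasurable_congr h) rfl rfl

lemma sq_lpNorm_two {U : Ω → E} (hU : AEStronglyMeasurable U μ) :
    lpNorm U 2 μ ^ 2 = ∫ ω, ‖U ω‖ ^ 2 ∂μ := by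
  rw [lpNorm_eq_integral_norm_rpow_toReal (by simp) (by simp) hU]
  simp only [ENNReal.toReal_ofNat, Real.rpow_ofNat]
  rw [← Real.rpow_natCast, ← Real.rpow_mul (integral_nonneg fun x => sq_nonneg _)]
  simp

variable [IsProbabilityMeasure μ]

lemma norm_integral_le_lpNorm_two [NormedSpace ℝ E] {U : Ω → E} (hU : BddMeas U) :
    ‖∫ ω, U ω ∂μ‖ ≤ lpNorm U 2 μ := by
  refine le_of_sq_le_sq ?_ lpNorm_nonneg
  rw [sq_lpNorm_two hU.1.aestronglyMeasurable]
  exact norm_integral_sq_le_integral_norm_sq hU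

end SecondMoment

section ConditionalLaw

variable {Ω α β E : Type*} {𝓕 mΩ : MeasurableSpace Ω} {mα : MeasurableSpace α}
  {mβ : MeasurableSpace β} [NormedAddCommGroup E] [NormedSpace ℝ E] {μ : Measure Ω}
  [IsFiniteMeasure μ] {Y : Ω → α} {Z : Ω → β} {κ : Kernel α β} [IsMarkovKernel κ]

lemma map_restrict_prodMk_eq_compProd_of_condProb (h𝓕 : 𝓕 ≤ mΩ) (hY : Measurable[𝓕] Y)
    (hZ : Measurable Z)
    (h : ∀ Γ, MeasurableSet Γ → μ⟦Z ⁻¹' Γ | 𝓕⟧ =ᵐ[μ] fun ω => (κ (Y ω)).real Γ)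
    {A : Set Ω} (hA : MeasurableSet[𝓕] A) :
    (μ.restrict A).map (fun ω => (Y ω, Z ω)) = ((μ.restrict A).map Y) ⊗ₘ κ := by
  have hY' : Measurable Y := hY.mono h𝓕 le_rfl
  refine Measure.ext_prod fun {S Γ} hS hΓ => ?_
  have hSA : MeasurableSet[𝓕] (Y ⁻¹' S ∩ A) := (hY hS).inter hA
  rw [Measure.map_apply (hY'.prodMk hZ) (hS.prod hΓ), Measure.compProd_apply_prod hS hΓ,
    setLIntegral_map hS (κ.measurable_coe hΓ) hY', Measure.restrict_restrict (hY' hS),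
    Measure.restrict_apply ((hY'.prodMk hZ) (hS.prod hΓ)), Set.mk_preimage_prod]
  have hκ : ∫⁻ ω in Y ⁻¹' S ∩ A, κ (Y ω) Γ ∂μ ≠ ⊤ :=
    ((setLIntegral_mono' (h𝓕 _ hSA) fun _ _ => prob_le_one).trans_lt
      (by simp [measure_lt_top])).ne
  rw [← ENNReal.toReal_eq_toReal_iff' (measure_ne_top _ _) hκ]
  calc (μ (Y ⁻¹' S ∩ Z ⁻¹' Γ ∩ A)).toReal
      = ∫ ω in Y ⁻¹' S ∩ A, (Z ⁻¹' Γ).indicator (fun _ => (1 : ℝ)) ω ∂μ := by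
        simp [setIntegral_indicator (hZ hΓ), Measure.real, Set.inter_right_comm]
    _ = ∫ ω in Y ⁻¹' S ∩ A, (κ (Y ω)).real Γ ∂μ := by
        rw [← setIntegral_condExp h𝓕 ((integrable_const 1).indicator (hZ hΓ)) hSA]
        exact setIntegral_congr_ae (h𝓕 _ hSA) ((h Γ hΓ).mono fun ω hω _ => hω)
    _ = (∫⁻ ω in Y ⁻¹' S ∩ A, κ (Y ω) Γ ∂μ).toReal :=
        integral_toReal ((κ.measurable_coe hΓ).comp hY').aemeasurable
          (ae_of_all _ fun ω => measure_lt_top _ _)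

lemma condExp_prodMk_ae_eq_integral_kernel [CompleteSpace E] (h𝓕 : 𝓕 ≤ mΩ) (hY : Measurable[𝓕] Y)
    (hZ : Measurable Z)
    (h : ∀ Γ, MeasurableSet Γ → μ⟦Z ⁻¹' Γ | 𝓕⟧ =ᵐ[μ] fun ω => (κ (Y ω)).real Γ)
    {Ψ : α × β → E} (hΨ : BddMeas Ψ) :
    μ[fun ω => Ψ (Y ω, Z ω) | 𝓕] =ᵐ[μ] fun ω => ∫ y, Ψ (Y ω, y) ∂κ (Y ω) := by
  have hY' : Measurable Y := hY.mono h𝓕 le_rfl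
  have hint := hΨ.kernel_prod κ
  refine (ae_eq_condExp_of_forall_setIntegral_eq h𝓕 ((hΨ.comp (hY'.prodMk hZ)).integrable μ)
    (fun A _ _ => ((hint.comp hY').integrable _).integrableOn) (fun A hA _ => ?_)
    (hint.1.comp_measurable hY).aestronglyMeasurable).symm
  rw [← integral_map (φ := fun ω => (Y ω, Z ω)) (f := Ψ) (hY'.prodMk hZ).aemeasurable
      hΨ.1.aestronglyMeasurable, map_restrict_prodMk_eq_compProd_of_condProb h𝓕 hY hZ h hA,
    Measure.integral_compProd (hΨ.integrable _),
    integral_map hY'.aemeasurable hint.1.aestronglyMeasurable]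

end ConditionalLaw

section StepKernel

variable {𝒳 : ℕ → Type*} [∀ j, MeasurableSpace (𝒳 j)] {P : ∀ j, Kernel (𝒳 j) (𝒳 (j + 1))}
  {E : Type*} [NormedAddCommGroup E] [NormedSpace ℝ E]

instance isMarkovKernel_stepKernel [∀ j, IsMarkovKernel (P j)] (j i : ℕ) :
    IsMarkovKernel (stepKernel P j i) := by
  induction i with
  | zero => rw [stepKernel]; infer_instance
  | succ i ih => rw [stepKernel]; infer_instance

lemma integral_stepKernel_zero [CompleteSpace E] {j : ℕ} {u : 𝒳 j → E} (hu : BddMeas u) (x : 𝒳 j) :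
    ∫ y, u y ∂stepKernel P j 0 x = u x := by
  rw [stepKernel, Kernel.id_apply]
  exact integral_dirac' _ _ hu.1

lemma integral_stepKernel_succ [∀ j, IsMarkovKernel (P j)] {j i : ℕ}
    {u : 𝒳 (j + i + 1) → E} (hu : BddMeas u) (x : 𝒳 j) :
    ∫ y, u y ∂stepKernel P j (i + 1) x = ∫ z, ∫ y, u y ∂P (j + i) z ∂stepKernel P j i x := by
  rw [stepKernel]
  exact Kernel.integral_comp (hu.integrable _)

/-- The failure of `u` to be space-time harmonic for `P`, that is, of `u j (X j)` to be a
martingale. Functions on the state spaces are estimated through their defect. -/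
noncomputable def stepDefect (P : ∀ j, Kernel (𝒳 j) (𝒳 (j + 1))) (u : ∀ j, 𝒳 j → E) (j : ℕ)
    (x : 𝒳 j) : E :=
  u j x - ∫ y, u (j + 1) y ∂P j x

variable [∀ j, IsMarkovKernel (P j)] {u : ∀ j, 𝒳 j → E}

lemma BddMeas.stepDefect (hu : ∀ j, BddMeas (u j)) (j : ℕ) : BddMeas (stepDefect P u j) :=
  (hu j).sub ((hu (j + 1)).kernel (P j))

lemma eq_sum_integral_stepDefect_add [CompleteSpace E] (hu : ∀ j, BddMeas (u j)) (j r : ℕ)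
    (x : 𝒳 j) :
    u j x = ∑ i ∈ Finset.range r, (∫ y, stepDefect P u (j + i) y ∂stepKernel P j i x)
      + ∫ y, u (j + r) y ∂stepKernel P j r x := by
  induction r with
  | zero => simpa using (integral_stepKernel_zero (hu j) x).symm
  | succ r ih =>
    have hstep : ∫ y, u (j + (r + 1)) y ∂stepKernel P j (r + 1) x
        = ∫ z, ∫ y, u (j + r + 1) y ∂P (j + r) z ∂stepKernel P j r x :=
      integral_stepKernel_succ (hu (j + r + 1)) x
    rw [ih, Finset.sum_range_succ, add_assoc, hstep,
      ← integral_add ((BddMeas.stepDefect hu _).integrable _)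
        (((hu (j + r + 1)).kernel _).integrable _)]
    simp only [_root_.stepDefect, sub_add_cancel]

variable {n₀ : ℕ} {γ : ℝ} {m : ∀ j, Measure (𝒳 j)}

lemma DoeblinMinorization.smul_le_stepKernel [∀ j, IsProbabilityMeasure (m j)]
    (hD : DoeblinMinorization P n₀ γ m) (hγ : 0 ≤ γ) (j : ℕ) (x : 𝒳 j) :
    ENNReal.ofReal γ • m (j + n₀) ≤ stepKernel P j n₀ x := by
  refine Measure.le_iff.2 fun Γ hΓ => ?_
  rw [Measure.smul_apply, smul_eq_mul, ← ofReal_measureReal, ← ofReal_measureReal,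
    ← ENNReal.ofReal_mul hγ]
  exact ENNReal.ofReal_le_ofReal (hD j x Γ hΓ)

lemma DoeblinMinorization.sub_le_of_abs_stepDefect_le [∀ j, IsProbabilityMeasure (m j)]
    (hD : DoeblinMinorization P n₀ γ m) (hn₀ : 0 < n₀) (hγ : 0 ≤ γ)
    {g : ∀ j, 𝒳 j → ℝ} (hg : ∀ j, BddMeas (g j)) {n : ℕ} (hgn : ∀ j, n ≤ j → ∀ x, g j x = 0)
    {K B : ℝ} (hK : ∀ j x, |stepDefect P g j x| ≤ K) (hB0 : 0 ≤ B) (hB : 2 * K * n₀ ≤ γ * B)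
    (j : ℕ) (x y : 𝒳 j) : g j x - g j y ≤ B := by
  obtain ⟨r, hr⟩ : ∃ r, n ≤ j + r := ⟨n, Nat.le_add_left n j⟩
  induction r using Nat.strong_induction_on generalizing j with
  | _ r ih =>
    rcases r.eq_zero_or_pos with rfl | hr0
    · simp [hgn j hr, hB0]
    have hdefect : ∀ i ∈ Finset.range n₀,
        (∫ z, stepDefect P g (j + i) z ∂stepKernel P j i x)
          - ∫ z, stepDefect P g (j + i) z ∂stepKernel P j i y ≤ 2 * K := fun i _ => by
      have hbound : ∀ x, |∫ z, stepDefect P g (j + i) z ∂stepKernel P j i x| ≤ K := fun x => by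
        simpa using norm_integral_le_of_norm_le_const (μ := stepKernel P j i x)
          (f := stepDefect P g (j + i)) (ae_of_all _ (hK (j + i)))
      linarith [abs_le.1 (hbound x), abs_le.1 (hbound y)]
    have hsum := Finset.sum_le_sum hdefect
    have hosc := integral_sub_integral_le_of_minorization (hD.smul_le_stepKernel hγ j x)
      (hD.smul_le_stepKernel hγ j y) (hg (j + n₀))
      (fun x y => ih (r - 1) (by omega) (j + n₀) x y (by omega))
    rw [measureReal_univ_ofReal_smul hγ] at hosc
    rw [Finset.sum_sub_distrib, Finset.sum_const, Finset.card_range, nsmul_eq_mul] at hsum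
    rw [eq_sum_integral_stepDefect_add (P := P) hg j n₀ x,
      eq_sum_integral_stepDefect_add (P := P) hg j n₀ y]
    linarith

end StepKernel

section Past

variable {Ω : Type*} {𝒳 : ℕ → Type*} [∀ j, MeasurableSpace (𝒳 j)]

lemma measurable_pastSigma (X : ∀ j, Ω → 𝒳 j) {i j : ℕ} (hij : i ≤ j) :
    Measurable[pastSigma X j] (X i) :=
  Measurable.of_comap_le <| le_iSup₂
    (f := fun i (_ : i ∈ Set.Iic j) => MeasurableSpace.comap (X i) inferInstance) i hij

lemma pastSigma_mono (X : ∀ j, Ω → 𝒳 j) : Monotone (pastSigma X) := fun _ _ hij =>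
  iSup₂_le fun _ hk => (measurable_pastSigma X (hk.trans hij)).comap_le

lemma pastSigma_le {mΩ : MeasurableSpace Ω} {X : ∀ j, Ω → 𝒳 j} (hX : ∀ j, Measurable (X j))
    (j : ℕ) : pastSigma X j ≤ mΩ :=
  iSup₂_le fun i _ => (hX i).comap_le

end Past

namespace IsMarkovChain

variable {Ω : Type*} {mΩ : MeasurableSpace Ω} {𝒳 : ℕ → Type*} [∀ j, MeasurableSpace (𝒳 j)]
  {μ : Measure Ω} [IsProbabilityMeasure μ] {X : ∀ j, Ω → 𝒳 j}
  {P : ∀ j, Kernel (𝒳 j) (𝒳 (j + 1))} {E : Type*} [NormedAddCommGroup E] [NormedSpace ℝ E]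
  [CompleteSpace E]

lemma condExp_prodMk (hX : IsMarkovChain μ X P) (j : ℕ) {Ψ : 𝒳 j × 𝒳 (j + 1) → E}
    (hΨ : BddMeas Ψ) :
    μ[fun ω => Ψ (X j ω, X (j + 1) ω) | pastSigma X j]
      =ᵐ[μ] fun ω => ∫ y, Ψ (X j ω, y) ∂P j (X j ω) :=
  have := hX.isMarkovKernel j
  condExp_prodMk_ae_eq_integral_kernel (pastSigma_le hX.measurable j)
    (measurable_pastSigma X le_rfl) (hX.measurable _) (hX.condProb j) hΨ

lemma integral_mul_prodMk {R : Type*} [NormedRing R] [NormedAlgebra ℝ R] [CompleteSpace R]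
    (hX : IsMarkovChain μ X P) (j : ℕ) {φ : Ω → R} (hφ : BddMeas φ)
    (hφX : StronglyMeasurable[pastSigma X j] φ) {Ψ : 𝒳 j × 𝒳 (j + 1) → R} (hΨ : BddMeas Ψ) :
    ∫ ω, φ ω * Ψ (X j ω, X (j + 1) ω) ∂μ
      = ∫ ω, φ ω * ∫ y, Ψ (X j ω, y) ∂P j (X j ω) ∂μ := by
  have hΨX : BddMeas fun ω => Ψ (X j ω, X (j + 1) ω) :=
    hΨ.comp ((hX.measurable j).prodMk (hX.measurable (j + 1)))
  rw [← integral_condExp (pastSigma_le hX.measurable j)]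
  refine integral_congr_ae ((condExp_bilin_of_stronglyMeasurable_left
    (ContinuousLinearMap.mul ℝ R) hφX ((hφ.mul hΨX).integrable μ) (hΨX.integrable μ)).trans ?_)
  filter_upwards [hX.condExp_prodMk j hΨ] with ω hω
  rw [hω, ContinuousLinearMap.mul_apply']

lemma lpNorm_integral_prodMk_le (hX : IsMarkovChain μ X P) (j : ℕ) {Ψ : 𝒳 j × 𝒳 (j + 1) → E}
    (hΨ : BddMeas Ψ) {p : ENNReal} (hp : 1 ≤ p) :
    lpNorm (fun ω => ∫ y, Ψ (X j ω, y) ∂P j (X j ω)) p μ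
      ≤ lpNorm (fun ω => Ψ (X j ω, X (j + 1) ω)) p μ := by
  rw [← lpNorm_congr_ae (hX.condExp_prodMk j hΨ)]
  have hΨX := hΨ.comp ((hX.measurable j).prodMk (hX.measurable (j + 1)))
  exact (hΨX.memLp μ p).lpNorm_condExp_le_lpNorm hp

lemma condExp_stepKernel (hX : IsMarkovChain μ X P) (j i : ℕ) {u : 𝒳 (j + i) → E}
    (hu : BddMeas u) :
    μ[fun ω => u (X (j + i) ω) | pastSigma X j]
      =ᵐ[μ] fun ω => ∫ y, u y ∂stepKernel P j i (X j ω) := by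
  have := hX.isMarkovKernel
  induction i with
  | zero =>
    refine (condExp_of_stronglyMeasurable (pastSigma_le hX.measurable j)
      (hu.1.comp_measurable (measurable_pastSigma X le_rfl))
      ((hu.comp (hX.measurable _)).integrable μ)).eventuallyEq.trans (ae_of_all _ fun ω => ?_)
    exact (integral_stepKernel_zero hu (X j ω)).symm
  | succ i ih =>
    calc μ[fun ω => u (X (j + (i + 1)) ω) | pastSigma X j]
        =ᵐ[μ] μ[μ[fun ω => u (X (j + i + 1) ω) | pastSigma X (j + i)] | pastSigma X j] :=
          (condExp_condExp_of_le (pastSigma_mono X (Nat.le_add_right j i))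
            (pastSigma_le hX.measurable _)).symm
      _ =ᵐ[μ] μ[fun ω => ∫ y, u y ∂P (j + i) (X (j + i) ω) | pastSigma X j] :=
          condExp_congr_ae (hX.condExp_prodMk (j + i) (hu.comp measurable_snd))
      _ =ᵐ[μ] fun ω => ∫ z, ∫ y, u y ∂P (j + i) z ∂stepKernel P j i (X j ω) :=
          ih (hu.kernel (P (j + i)))
      _ = fun ω => ∫ y, u y ∂stepKernel P j (i + 1) (X j ω) :=
          funext fun ω => (integral_stepKernel_succ hu (X j ω)).symm

lemma integral_stepKernel (hX : IsMarkovChain μ X P) (j i : ℕ) {u : 𝒳 (j + i) → E}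
    (hu : BddMeas u) :
    ∫ ω, ∫ y, u y ∂stepKernel P j i (X j ω) ∂μ = ∫ ω, u (X (j + i) ω) ∂μ := by
  rw [← integral_congr_ae (hX.condExp_stepKernel j i hu),
    integral_condExp (pastSigma_le hX.measurable j)]

lemma lpNorm_stepKernel_le (hX : IsMarkovChain μ X P) (j i : ℕ) {u : 𝒳 (j + i) → E}
    (hu : BddMeas u) {p : ENNReal} (hp : 1 ≤ p) :
    lpNorm (fun ω => ∫ y, u y ∂stepKernel P j i (X j ω)) p μ
      ≤ lpNorm (fun ω => u (X (j + i) ω)) p μ := by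
  rw [← lpNorm_congr_ae (hX.condExp_stepKernel j i hu)]
  exact ((hu.comp (hX.measurable _)).memLp μ p).lpNorm_condExp_le_lpNorm hp

end IsMarkovChain

lemma lpNorm_two_le_lpNorm_two_sub_const {Ω E : Type*} {mΩ : MeasurableSpace Ω}
    [NormedAddCommGroup E] [InnerProductSpace ℝ E] [CompleteSpace E] {μ : Measure Ω}
    [IsProbabilityMeasure μ] {U : Ω → E} (hU : BddMeas U) (hU0 : ∫ ω, U ω ∂μ = 0) (c : E) :
    lpNorm U 2 μ ≤ lpNorm (fun ω => U ω - c) 2 μ := by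
  have hinner : Integrable (fun ω => 2 * inner ℝ c (U ω)) μ :=
    ((hU.integrable μ).const_inner c).const_mul 2
  have hexpand : ∀ ω, ‖U ω - c‖ ^ 2 = ‖U ω‖ ^ 2 - 2 * inner ℝ c (U ω) + ‖c‖ ^ 2 := fun ω => by
    rw [norm_sub_sq_real, real_inner_comm]
  refine le_of_sq_le_sq ?_ lpNorm_nonneg
  rw [sq_lpNorm_two hU.1.aestronglyMeasurable,
    sq_lpNorm_two (hU.sub (.const c)).1.aestronglyMeasurable]
  simp_rw [hexpand]
  rw [integral_add (by exact (hU.norm_sq.integrable μ).sub hinner) (integrable_const _),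
    integral_sub (hU.norm_sq.integrable μ) hinner, integral_const_mul,
    integral_inner (hU.integrable μ), hU0]
  simp

namespace IsMarkovChain

variable {Ω : Type*} {mΩ : MeasurableSpace Ω} {𝒳 : ℕ → Type*} [∀ j, MeasurableSpace (𝒳 j)]
  {μ : Measure Ω} [IsProbabilityMeasure μ] {X : ∀ j, Ω → 𝒳 j}
  {P : ∀ j, Kernel (𝒳 j) (𝒳 (j + 1))} {E : Type*} [NormedAddCommGroup E] [InnerProductSpace ℝ E]
  [CompleteSpace E] {n₀ : ℕ} {γ : ℝ} {m : ∀ j, Measure (𝒳 j)} [∀ j, IsProbabilityMeasure (m j)]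

lemma lpNorm_stepKernel_le_sqrt_mul (hX : IsMarkovChain μ X P) (hD : DoeblinMinorization P n₀ γ m)
    (hγ : 0 ≤ γ) (j : ℕ) {u : 𝒳 (j + n₀) → E} (hu : BddMeas u)
    (hu0 : ∫ ω, u (X (j + n₀) ω) ∂μ = 0) :
    lpNorm (fun ω => ∫ y, u y ∂stepKernel P j n₀ (X j ω)) 2 μ
      ≤ √(1 - γ) * lpNorm (fun ω => u (X (j + n₀) ω)) 2 μ := by
  have := hX.isMarkovKernel
  have hv : BddMeas (fun ω => ∫ y, u y ∂stepKernel P j n₀ (X j ω)) :=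
    (hu.kernel _).comp (hX.measurable j)
  have hvc := hv.sub (.const (∫ y, u y ∂(ENNReal.ofReal γ • m (j + n₀))))
  refine (lpNorm_two_le_lpNorm_two_sub_const hv ((hX.integral_stepKernel j n₀ hu).trans hu0)
    (∫ y, u y ∂(ENNReal.ofReal γ • m (j + n₀)))).trans ?_
  rw [← Real.sqrt_sq (lpNorm_nonneg (f := fun ω => u (X (j + n₀) ω)) (p := 2) (μ := μ)),
    ← Real.sqrt_mul' _ (sq_nonneg _)]
  refine Real.le_sqrt_of_sq_le ?_
  rw [sq_lpNorm_two hvc.1.aestronglyMeasurable,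
    sq_lpNorm_two (hu.comp (hX.measurable _)).1.aestronglyMeasurable,
    ← hX.integral_stepKernel j n₀ hu.norm_sq, ← integral_const_mul]
  refine integral_mono (hvc.norm_sq.integrable μ)
    (((hu.norm_sq.kernel _).comp (hX.measurable j)).integrable μ |>.const_mul _) fun ω => ?_
  simpa only [measureReal_univ_ofReal_smul hγ] using
    norm_integral_sub_sq_le_of_minorization (hD.smul_le_stepKernel hγ j (X j ω)) hu

lemma lpNorm_le_sum_lpNorm_stepDefect_add (hX : IsMarkovChain μ X P)
    (hD : DoeblinMinorization P n₀ γ m) (hγ : 0 ≤ γ) {u : ∀ j, 𝒳 j → E}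
    (hu : ∀ j, BddMeas (u j)) (j : ℕ) (hu0 : ∫ ω, u (j + n₀) (X (j + n₀) ω) ∂μ = 0) :
    lpNorm (fun ω => u j (X j ω)) 2 μ
      ≤ ∑ i ∈ Finset.range n₀, lpNorm (fun ω => stepDefect P u (j + i) (X (j + i) ω)) 2 μ
        + √(1 - γ) * lpNorm (fun ω => u (j + n₀) (X (j + n₀) ω)) 2 μ := by
  have := hX.isMarkovKernel
  have hdefect := BddMeas.stepDefect (P := P) hu
  have hterm : ∀ i ∈ Finset.range n₀,
      MemLp (fun ω => ∫ y, stepDefect P u (j + i) y ∂stepKernel P j i (X j ω)) 2 μ :=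
    fun i _ => (((hdefect (j + i)).kernel _).comp (hX.measurable j)).memLp μ 2
  set W : Ω → E :=
    ∑ i ∈ Finset.range n₀, fun ω => ∫ y, stepDefect P u (j + i) y ∂stepKernel P j i (X j ω)
  set R : Ω → E := fun ω => ∫ y, u (j + n₀) y ∂stepKernel P j n₀ (X j ω)
  have hexpand : (fun ω => u j (X j ω)) = W + R := funext fun ω => by
    simpa only [W, R, Pi.add_apply, Finset.sum_apply] using
      eq_sum_integral_stepDefect_add (P := P) hu j n₀ (X j ω)
  have hW : lpNorm W 2 μ
      ≤ ∑ i ∈ Finset.range n₀, lpNorm (fun ω => stepDefect P u (j + i) (X (j + i) ω)) 2 μ :=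
    (lpNorm_sum_le hterm one_le_two).trans (Finset.sum_le_sum fun i _ =>
      hX.lpNorm_stepKernel_le j i (hdefect (j + i)) one_le_two)
  have hR : lpNorm R 2 μ ≤ √(1 - γ) * lpNorm (fun ω => u (j + n₀) (X (j + n₀) ω)) 2 μ :=
    hX.lpNorm_stepKernel_le_sqrt_mul hD hγ j (hu (j + n₀)) hu0
  have hWmem : MemLp W 2 μ := memLp_finsetSum' _ hterm
  rw [hexpand]
  exact (lpNorm_add_le hWmem one_le_two).trans (add_le_add hW hR)

end IsMarkovChain

section Sequences

lemma add_mul_sq_le {ρ : ℝ} (hρ0 : 0 ≤ ρ) (hρ1 : ρ < 1) (x y : ℝ) :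
    (x + ρ * y) ^ 2 ≤ x ^ 2 / (1 - ρ) + ρ * y ^ 2 := by
  have hτ : 0 < 1 - ρ := sub_pos.2 hρ1
  have hid : x ^ 2 / (1 - ρ) + ρ * y ^ 2 - (x + ρ * y) ^ 2
      = ρ / (1 - ρ) * (x - (1 - ρ) * y) ^ 2 := by
    field_simp
    ring
  have hnonneg : 0 ≤ ρ / (1 - ρ) * (x - (1 - ρ) * y) ^ 2 := by positivity
  linarith

lemma sum_range_add_sq_le {s : ℕ → ℝ} {n : ℕ} (hn : ∀ j, n ≤ j → s j = 0) (i : ℕ) :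
    ∑ j ∈ Finset.range n, s (j + i) ^ 2 ≤ ∑ j ∈ Finset.range n, s j ^ 2 := by
  calc ∑ j ∈ Finset.range n, s (j + i) ^ 2
      ≤ ∑ j ∈ Finset.range i, s j ^ 2 + ∑ j ∈ Finset.range n, s (i + j) ^ 2 := by
        simp only [add_comm i]
        exact le_add_of_nonneg_left (Finset.sum_nonneg fun j _ => sq_nonneg _)
    _ = ∑ j ∈ Finset.range n, s j ^ 2 + ∑ j ∈ Finset.range i, s (n + j) ^ 2 := by
        rw [← Finset.sum_range_add (fun j => s j ^ 2), ← Finset.sum_range_add (fun j => s j ^ 2),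
          add_comm]
    _ = ∑ j ∈ Finset.range n, s j ^ 2 := by
        simp [hn]

variable {a b : ℕ → ℝ} {n n₀ : ℕ} {ρ : ℝ}

lemma sum_sq_le_of_le_sum_add_mul (hρ0 : 0 ≤ ρ) (hρ1 : ρ < 1) (ha : ∀ j, 0 ≤ a j)
    (han : ∀ j, n ≤ j → a j = 0) (hbn : ∀ j, n ≤ j → b j = 0)
    (hrec : ∀ j, a j ≤ ∑ i ∈ Finset.range n₀, b (j + i) + ρ * a (j + n₀)) :
    ∑ j ∈ Finset.range n, a j ^ 2 ≤ (n₀ / (1 - ρ)) ^ 2 * ∑ j ∈ Finset.range n, b j ^ 2 := by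
  have hτ : 0 < 1 - ρ := sub_pos.2 hρ1
  have hterm : ∀ j, a j ^ 2
      ≤ n₀ / (1 - ρ) * ∑ i ∈ Finset.range n₀, b (j + i) ^ 2 + ρ * a (j + n₀) ^ 2 := fun j => by
    have hcs : (∑ i ∈ Finset.range n₀, b (j + i)) ^ 2
        ≤ n₀ * ∑ i ∈ Finset.range n₀, b (j + i) ^ 2 := by
      simpa using sq_sum_le_card_mul_sum_sq (s := Finset.range n₀) (f := fun i => b (j + i))
    calc a j ^ 2 ≤ (∑ i ∈ Finset.range n₀, b (j + i) + ρ * a (j + n₀)) ^ 2 :=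
          pow_le_pow_left₀ (ha j) (hrec j) 2
      _ ≤ (∑ i ∈ Finset.range n₀, b (j + i)) ^ 2 / (1 - ρ) + ρ * a (j + n₀) ^ 2 :=
          add_mul_sq_le hρ0 hρ1 _ _
      _ ≤ _ := by
          rw [div_mul_eq_mul_div]
          gcongr
  have hsum : ∑ j ∈ Finset.range n, a j ^ 2
      ≤ n₀ / (1 - ρ) * (n₀ * ∑ j ∈ Finset.range n, b j ^ 2)
        + ρ * ∑ j ∈ Finset.range n, a j ^ 2 := by
    refine (Finset.sum_le_sum fun j _ => hterm j).trans ?_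
    rw [Finset.sum_add_distrib, ← Finset.mul_sum, ← Finset.mul_sum, Finset.sum_comm]
    refine add_le_add (mul_le_mul_of_nonneg_left ?_ (by positivity))
      (mul_le_mul_of_nonneg_left (sum_range_add_sq_le han n₀) hρ0)
    simpa using Finset.sum_le_card_nsmul (Finset.range n₀) _ _ fun i _ => sum_range_add_sq_le hbn i
  rw [div_pow, div_mul_eq_mul_div, le_div_iff₀ (by positivity)]
  rw [← sub_le_iff_le_add, div_mul_eq_mul_div, le_div_iff₀ hτ] at hsum
  linarith

lemma sum_sq_le_sum_sq_of_contracting_recursion {d : ℕ → ℝ} {θ : ℝ} (hρ0 : 0 ≤ ρ) (hρ1 : ρ < 1)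
    (hθ0 : 0 ≤ θ) (hθ : 2 * n₀ * θ ≤ 1 - ρ) (ha : ∀ j, 0 ≤ a j) (hb : ∀ j, 0 ≤ b j)
    (han : ∀ j, n ≤ j → a j = 0) (hdn : ∀ j, n ≤ j → d j = 0)
    (hrec : ∀ j, a j ≤ ∑ i ∈ Finset.range n₀, b (j + i) + ρ * a (j + n₀))
    (hbd : ∀ j, b j ≤ θ * (d (j + 1) + a (j + 1))) :
    ∑ j ∈ Finset.range n, a j ^ 2 ≤ ∑ j ∈ Finset.range n, d j ^ 2 := by
  have hbn : ∀ j, n ≤ j → b j = 0 := fun j hj => (hb j).antisymm' <| by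
    simpa [han (j + 1) (by omega), hdn (j + 1) (by omega)] using hbd j
  have hbsq : ∀ j, b j ^ 2 ≤ 2 * θ ^ 2 * (d (j + 1) ^ 2 + a (j + 1) ^ 2) := fun j =>
    calc b j ^ 2 ≤ (θ * (d (j + 1) + a (j + 1))) ^ 2 := pow_le_pow_left₀ (hb j) (hbd j) 2
      _ = θ ^ 2 * (d (j + 1) + a (j + 1)) ^ 2 := mul_pow _ _ _
      _ ≤ θ ^ 2 * (2 * (d (j + 1) ^ 2 + a (j + 1) ^ 2)) := by gcongr; exact add_sq_le
      _ = 2 * θ ^ 2 * (d (j + 1) ^ 2 + a (j + 1) ^ 2) := by ring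
  have hbsum : ∑ j ∈ Finset.range n, b j ^ 2
      ≤ 2 * θ ^ 2 * (∑ j ∈ Finset.range n, d j ^ 2 + ∑ j ∈ Finset.range n, a j ^ 2) := by
    refine (Finset.sum_le_sum fun j _ => hbsq j).trans ?_
    rw [← Finset.mul_sum, Finset.sum_add_distrib]
    exact mul_le_mul_of_nonneg_left
      (add_le_add (sum_range_add_sq_le hdn 1) (sum_range_add_sq_le han 1)) (by positivity)
  have hcoeff : (n₀ / (1 - ρ)) ^ 2 * (2 * θ ^ 2) ≤ 1 / 2 := by
    have hτ : 0 < 1 - ρ := sub_pos.2 hρ1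
    have hle : n₀ / (1 - ρ) * θ ≤ 1 / 2 := by
      rw [div_mul_eq_mul_div, div_le_iff₀ hτ]
      linarith
    linarith [pow_le_pow_left₀ (by positivity) hle 2]
  have hmain := (sum_sq_le_of_le_sum_add_mul hρ0 hρ1 ha han hbn hrec).trans
    (mul_le_mul_of_nonneg_left hbsum (sq_nonneg _))
  rw [← mul_assoc] at hmain
  linarith [hmain.trans (mul_le_mul_of_nonneg_right hcoeff (add_nonneg
    (Finset.sum_nonneg fun j _ => sq_nonneg (d j)) (Finset.sum_nonneg fun j _ => sq_nonneg (a j))))]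

end Sequences

section OneStep

lemma norm_cexp_sub_one_mul_le {w v : ℂ} (hw : ‖w‖ ≤ 1) :
    ‖(Complex.exp w - 1) * (1 + v)‖ ≤ 2 * ‖w‖ * (1 + ‖v‖) := by
  rw [norm_mul]
  gcongr
  · exact Complex.norm_exp_sub_one_le hw
  · simpa using norm_add_le 1 v

lemma norm_cexp_sub_one_mul_sub_le {w v : ℂ} (hw : ‖w‖ ≤ 1) :
    ‖(Complex.exp w - 1) * (1 + v) - w‖ ≤ 2 * ‖w‖ ^ 2 + ‖v‖ ^ 2 := by
  have hsplit : (Complex.exp w - 1) * (1 + v) - w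
      = (Complex.exp w - 1 - w) + (Complex.exp w - 1) * v := by ring
  calc ‖(Complex.exp w - 1) * (1 + v) - w‖
      ≤ ‖Complex.exp w - 1 - w‖ + ‖Complex.exp w - 1‖ * ‖v‖ := by
        rw [hsplit, ← norm_mul]
        exact norm_add_le _ _
    _ ≤ ‖w‖ ^ 2 + 2 * ‖w‖ * ‖v‖ := by
        gcongr
        · exact Complex.norm_exp_sub_one_sub_id_le hw
        · exact Complex.norm_exp_sub_one_le hw
    _ ≤ 2 * ‖w‖ ^ 2 + ‖v‖ ^ 2 := by linarith [two_mul_le_add_sq ‖w‖ ‖v‖]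

variable {Ω : Type*} {mΩ : MeasurableSpace Ω} {μ : Measure Ω}

lemma lpNorm_const_mul_ofReal (c : ℂ) {u : Ω → ℝ} (hu : BddMeas u) (p : ENNReal) :
    lpNorm (fun ω => c * (u ω : ℂ)) p μ = ‖c‖ * lpNorm u p μ := by
  have hofReal : lpNorm (fun ω => (u ω : ℂ)) p μ = lpNorm u p μ := by
    rw [← lpNorm_norm hu.ofReal.1.aestronglyMeasurable, ← lpNorm_norm hu.1.aestronglyMeasurable]
    simp only [Complex.norm_real]
  rw [← hofReal]
  exact lpNorm_const_smul c (fun ω => (u ω : ℂ)) μ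

variable [IsProbabilityMeasure μ] {W V : Ω → ℂ} {β : ℝ}

lemma lpNorm_cexp_sub_one_mul_le (hW : BddMeas W) (hWβ : ∀ ω, ‖W ω‖ ≤ β) (hβ : β ≤ 1)
    (hV : BddMeas V) {p : ENNReal} (hp : 1 ≤ p) :
    lpNorm (fun ω => (Complex.exp (W ω) - 1) * (1 + V ω)) p μ
      ≤ 2 * (lpNorm W p μ + β * lpNorm V p μ) := by
  have hβ0 : 0 ≤ β := (norm_nonneg _).trans (hWβ (nonempty_of_isProbabilityMeasure μ).some)
  have hWn : MemLp (fun ω => ‖W ω‖) p μ := (hW.memLp μ p).norm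
  have hVn : MemLp (β • fun ω => ‖V ω‖) p μ := (hV.memLp μ p).norm.const_smul β
  have hsum : MemLp ((2 : ℝ) • ((fun ω => ‖W ω‖) + β • fun ω => ‖V ω‖)) p μ :=
    (hWn.add hVn).const_smul 2
  refine (lpNorm_mono_real hsum fun ω => ?_).trans ?_
  · calc ‖(Complex.exp (W ω) - 1) * (1 + V ω)‖ ≤ 2 * ‖W ω‖ * (1 + ‖V ω‖) :=
          norm_cexp_sub_one_mul_le ((hWβ ω).trans hβ)
      _ = 2 * (‖W ω‖ + ‖W ω‖ * ‖V ω‖) := by ring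
      _ ≤ 2 * (‖W ω‖ + β * ‖V ω‖) := by gcongr; exact hWβ ω
  · rw [lpNorm_const_smul, ← lpNorm_norm hW.1.aestronglyMeasurable p,
      ← lpNorm_norm hV.1.aestronglyMeasurable p]
    have hadd := lpNorm_add_le (g := β • fun ω => ‖V ω‖) hWn hp
    rw [lpNorm_const_smul] at hadd
    simpa [abs_of_nonneg hβ0] using hadd

lemma norm_integral_cexp_sub_one_mul_le (hW : BddMeas W) (hW1 : ∀ ω, ‖W ω‖ ≤ 1)
    (hW0 : ∫ ω, W ω ∂μ = 0) (hV : BddMeas V) :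
    ‖∫ ω, (Complex.exp (W ω) - 1) * (1 + V ω) ∂μ‖
      ≤ 2 * lpNorm W 2 μ ^ 2 + lpNorm V 2 μ ^ 2 := by
  have hprod : BddMeas fun ω => (Complex.exp (W ω) - 1) * (1 + V ω) :=
    (hW.cexp.sub (.const 1)).mul ((BddMeas.const 1).add hV)
  have hcentre : ∫ ω, (Complex.exp (W ω) - 1) * (1 + V ω) ∂μ
      = ∫ ω, ((Complex.exp (W ω) - 1) * (1 + V ω) - W ω) ∂μ := by
    rw [integral_sub (hprod.integrable μ) (hW.integrable μ), hW0, sub_zero]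
  have hW2 : Integrable (fun ω => 2 * ‖W ω‖ ^ 2) μ := (hW.norm_sq.integrable μ).const_mul 2
  rw [hcentre, sq_lpNorm_two hW.1.aestronglyMeasurable, sq_lpNorm_two hV.1.aestronglyMeasurable,
    ← integral_const_mul, ← integral_add hW2 (hV.norm_sq.integrable μ)]
  exact norm_integral_le_of_norm_le (hW2.add (hV.norm_sq.integrable μ))
    (ae_of_all _ fun ω => norm_cexp_sub_one_mul_sub_le (hW1 ω))

lemma lpNorm_le_of_forall_norm_le {E : Type*} [NormedAddCommGroup E] {U : Ω → E} {p : ENNReal}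
    (hp : 1 ≤ p) {B : ℝ} (hUB : ∀ ω, ‖U ω‖ ≤ B) : lpNorm U p μ ≤ B := by
  have hB : 0 ≤ B := (norm_nonneg _).trans (hUB (nonempty_of_isProbabilityMeasure μ).some)
  refine (lpNorm_mono_real ((BddMeas.const B).memLp μ p) hUB).trans_eq ?_
  rw [lpNorm_const (zero_lt_one.trans_le hp).ne' (NeZero.ne μ)]
  simp [abs_of_nonneg hB]

lemma half_le_norm_one_add {ε : ℂ} (hε : ‖ε‖ ≤ 1 / 2) : 1 / 2 ≤ ‖1 + ε‖ := by
  have := norm_sub_le (1 + ε) ε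
  rw [add_sub_cancel_right, norm_one] at this
  linarith

lemma lpNorm_one_add_add_div_sub_le {Q q : Ω → ℂ} (hq : BddMeas q) {p : ENNReal}
    (hp : 1 ≤ p) {ε : ℂ} {η : ℝ} (hε : ‖ε‖ ≤ 1 / 2) (hεη : ‖ε‖ ≤ η) (hqη : lpNorm q p μ ≤ η)
    (hQ1 : lpNorm Q p μ ≤ 1) :
    lpNorm (fun ω => (1 + Q ω + q ω) / (1 + ε) - (1 + Q ω)) p μ ≤ 6 * η := by
  have hhalf := half_le_norm_one_add hε
  have hne : 1 + ε ≠ 0 := norm_pos_iff.1 (by linarith)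
  have hfactor : (fun ω => (1 + Q ω + q ω) / (1 + ε) - (1 + Q ω))
      = (1 + ε)⁻¹ • (q - ((fun _ => ε) + ε • Q)) := by
    funext ω
    simp only [Pi.smul_apply, Pi.add_apply, Pi.sub_apply, smul_eq_mul]
    field_simp
    ring
  have hconst : MemLp (fun _ : Ω => ε) p μ := (BddMeas.const ε).memLp μ p
  have hnum : lpNorm (q - ((fun _ => ε) + ε • Q)) p μ ≤ η + (η + η) := by
    refine (lpNorm_sub_le (hq.memLp μ p) hp).trans (add_le_add hqη ?_)
    refine (lpNorm_add_le hconst hp).trans (add_le_add ?_ ?_)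
    · exact (lpNorm_le_of_forall_norm_le hp fun _ => le_rfl).trans hεη
    · rw [lpNorm_const_smul]
      exact (mul_le_of_le_one_right (norm_nonneg ε) hQ1).trans hεη
  have hinv : ‖(1 + ε)⁻¹‖ ≤ 2 := by
    rw [norm_inv]
    exact inv_le_of_inv_le₀ two_pos (by linarith)
  rw [hfactor, lpNorm_const_smul, coe_nnnorm]
  calc ‖(1 + ε)⁻¹‖ * lpNorm (q - ((fun _ => ε) + ε • Q)) p μ ≤ 2 * (η + (η + η)) :=
        mul_le_mul hinv hnum lpNorm_nonneg two_pos.le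
    _ = 6 * η := by ring

end OneStep

section BackwardRecursion

variable {𝒳 : ℕ → Type*} {E : Type*}

/-- The solution of the backward recursion `u j = T j (u (j + 1))` for `j < n` with terminal
values `u j = e` for `n ≤ j`. -/
noncomputable def backwardSol (T : ∀ j, (𝒳 (j + 1) → E) → 𝒳 j → E) (e : E) (n j : ℕ) : 𝒳 j → E :=
  if j < n then T j (backwardSol T e n (j + 1)) else fun _ => e
termination_by n - j

variable {T : ∀ j, (𝒳 (j + 1) → E) → 𝒳 j → E} {e : E} {n j : ℕ}

lemma backwardSol_of_lt (h : j < n) : backwardSol T e n j = T j (backwardSol T e n (j + 1)) := by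
  rw [backwardSol, if_pos h]

lemma backwardSol_of_le (h : n ≤ j) : backwardSol T e n j = fun _ => e := by
  rw [backwardSol, if_neg h.not_gt]

lemma bddMeas_backwardSol [∀ j, MeasurableSpace (𝒳 j)] [NormedAddCommGroup E]
    (hT : ∀ j u, BddMeas u → BddMeas (T j u)) (e : E) (n j : ℕ) :
    BddMeas (backwardSol T e n j) := by
  induction h : n - j generalizing j with
  | zero => exact backwardSol_of_le (T := T) (Nat.sub_eq_zero_iff_le.1 h) ▸ .const e
  | succ r ih =>
    rw [backwardSol_of_lt (by omega)]
    exact hT j _ (ih (j + 1) (by omega))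

end BackwardRecursion

section TailMean

variable {𝒳 : ℕ → Type*} [∀ j, MeasurableSpace (𝒳 j)] {P : ∀ j, Kernel (𝒳 j) (𝒳 (j + 1))}
  {f : ∀ j, 𝒳 j → ℝ} {n j : ℕ}

/-- The conditional mean of the remaining sum, `E[∑ f k (X k) | X j = x]` with `j ≤ k < n`: the
solution of Poisson's equation behind the martingale decomposition of `S_n`. -/
noncomputable def tailMean (P : ∀ j, Kernel (𝒳 j) (𝒳 (j + 1))) (f : ∀ j, 𝒳 j → ℝ) (n : ℕ) :
    ∀ j, 𝒳 j → ℝ :=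
  backwardSol (fun j u x => f j x + ∫ y, u y ∂P j x) 0 n

lemma tailMean_of_le (h : n ≤ j) (x : 𝒳 j) : tailMean P f n j x = 0 := by
  rw [tailMean, backwardSol_of_le h]

lemma stepDefect_tailMean_of_lt (h : j < n) (x : 𝒳 j) :
    stepDefect P (tailMean P f n) j x = f j x := by
  simp only [stepDefect, tailMean, backwardSol_of_lt h, add_sub_cancel_right]

lemma stepDefect_tailMean_of_le (h : n ≤ j) (x : 𝒳 j) :
    stepDefect P (tailMean P f n) j x = 0 := by
  simp [stepDefect, tailMean_of_le h, tailMean_of_le (h.trans (Nat.le_succ j))]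

lemma bddMeas_tailMean [∀ j, IsMarkovKernel (P j)] (hf : ∀ j, BddMeas (f j)) (n j : ℕ) :
    BddMeas (tailMean P f n j) :=
  bddMeas_backwardSol (fun j _ hu => (hf j).add (hu.kernel (P j))) 0 n j

lemma DoeblinMinorization.tailMean_sub_le [∀ j, IsMarkovKernel (P j)] {m : ∀ j, Measure (𝒳 j)}
    [∀ j, IsProbabilityMeasure (m j)] {n₀ : ℕ} {γ : ℝ} (hD : DoeblinMinorization P n₀ γ m)
    (hn₀ : 0 < n₀) (hγ : 0 ≤ γ) (hf : ∀ j, BddMeas (f j)) {K B : ℝ} (hK : ∀ j x, |f j x| ≤ K)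
    (hK0 : 0 ≤ K) (hB0 : 0 ≤ B) (hB : 2 * K * n₀ ≤ γ * B) (n j : ℕ) (x y : 𝒳 j) :
    tailMean P f n j x - tailMean P f n j y ≤ B := by
  refine hD.sub_le_of_abs_stepDefect_le hn₀ hγ (bddMeas_tailMean hf n)
    (fun _ h => tailMean_of_le h) (K := K) (fun i x => ?_) hB0 hB j x y
  rcases lt_or_ge i n with h | h
  · rw [stepDefect_tailMean_of_lt h]
    exact hK i x
  · rwa [stepDefect_tailMean_of_le h, abs_zero]

end TailMean

section MartingaleDifferences

variable {Ω : Type*} {mΩ : MeasurableSpace Ω} {𝒳 : ℕ → Type*} [∀ j, MeasurableSpace (𝒳 j)]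
  {μ : Measure Ω} {X : ∀ j, Ω → 𝒳 j} {P : ∀ j, Kernel (𝒳 j) (𝒳 (j + 1))} {g : ∀ j, 𝒳 j → ℝ}
  {n : ℕ} {B : ℝ}

/-- The value of `g (j + 1)` after a transition from time `j`, centred by its conditional mean. -/
noncomputable def transitionIncr (P : ∀ j, Kernel (𝒳 j) (𝒳 (j + 1))) (g : ∀ j, 𝒳 j → ℝ) (j : ℕ)
    (p : 𝒳 j × 𝒳 (j + 1)) : ℝ :=
  g (j + 1) p.2 - ∫ y, g (j + 1) y ∂P j p.1

/-- The martingale differences of `g` along the chain. The initial one is centred by the mean of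
`g 0 (X 0)`, so that together they decompose the centred sum of the defects of `g`. -/
noncomputable def martingaleDiff (μ : Measure Ω) (X : ∀ j, Ω → 𝒳 j)
    (P : ∀ j, Kernel (𝒳 j) (𝒳 (j + 1))) (g : ∀ j, 𝒳 j → ℝ) : ℕ → Ω → ℝ
  | 0, ω => g 0 (X 0 ω) - ∫ ω', g 0 (X 0 ω') ∂μ
  | j + 1, ω => transitionIncr P g j (X j ω, X (j + 1) ω)

lemma bddMeas_transitionIncr [∀ j, IsMarkovKernel (P j)] (hg : ∀ j, BddMeas (g j)) (j : ℕ) :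
    BddMeas (transitionIncr P g j) :=
  ((hg (j + 1)).comp measurable_snd).sub (((hg (j + 1)).kernel (P j)).comp measurable_fst)

lemma sum_stepDefect_add_eq_integral_add_sum_martingaleDiff (r : ℕ) (ω : Ω) :
    ∑ j ∈ Finset.range r, stepDefect P g j (X j ω) + g r (X r ω)
      = (∫ ω', g 0 (X 0 ω') ∂μ) + ∑ k ∈ Finset.range (r + 1), martingaleDiff μ X P g k ω := by
  induction r with
  | zero => simp [martingaleDiff]
  | succ r ih =>
    rw [Finset.sum_range_succ, Finset.sum_range_succ _ (r + 1), ← add_assoc, ← ih, stepDefect,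
      martingaleDiff, transitionIncr]
    ring

lemma abs_sub_integral_le {α : Type*} [MeasurableSpace α] {ν : Measure α} [IsProbabilityMeasure ν]
    {u : α → ℝ} (hu : Integrable u ν) {x : α} (hB : ∀ y, |u x - u y| ≤ B) :
    |u x - ∫ y, u y ∂ν| ≤ B := by
  have hmean : u x - ∫ y, u y ∂ν = ∫ y, (u x - u y) ∂ν := by
    rw [integral_sub (integrable_const _) hu]
    simp
  rw [hmean]
  simpa using norm_integral_le_of_norm_le_const (μ := ν) (f := fun y => u x - u y) (ae_of_all _ hB)

lemma martingaleDiff_eq_zero (hgn : ∀ j, n ≤ j → ∀ x, g j x = 0) {k : ℕ} (hk : n ≤ k) (ω : Ω) :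
    martingaleDiff μ X P g k ω = 0 := by
  cases k with
  | zero => simp [martingaleDiff, hgn 0 hk]
  | succ k => simp [martingaleDiff, transitionIncr, hgn (k + 1) hk]

lemma sum_stepDefect_eq_integral_add_sum_martingaleDiff (hgn : ∀ j, n ≤ j → ∀ x, g j x = 0)
    (ω : Ω) :
    ∑ j ∈ Finset.range n, stepDefect P g j (X j ω)
      = (∫ ω', g 0 (X 0 ω') ∂μ) + ∑ k ∈ Finset.range n, martingaleDiff μ X P g k ω := by
  have h := sum_stepDefect_add_eq_integral_add_sum_martingaleDiff (μ := μ) (X := X) (P := P)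
    (g := g) n ω
  rwa [hgn n le_rfl, add_zero, Finset.sum_range_succ, martingaleDiff_eq_zero hgn le_rfl,
    add_zero] at h

namespace IsMarkovChain

lemma bddMeas_martingaleDiff (hX : IsMarkovChain μ X P) (hg : ∀ j, BddMeas (g j)) (k : ℕ) :
    BddMeas (martingaleDiff μ X P g k) := by
  have := hX.isMarkovKernel
  cases k with
  | zero => exact ((hg 0).comp (hX.measurable 0)).sub (.const _)
  | succ k =>
    exact (bddMeas_transitionIncr hg k).comp ((hX.measurable k).prodMk (hX.measurable (k + 1)))

lemma stronglyMeasurable_martingaleDiff (hX : IsMarkovChain μ X P) (hg : ∀ j, BddMeas (g j))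
    {k j : ℕ} (hkj : k ≤ j) : StronglyMeasurable[pastSigma X j] (martingaleDiff μ X P g k) := by
  have := hX.isMarkovKernel
  cases k with
  | zero =>
    exact ((hg 0).1.comp_measurable (measurable_pastSigma X hkj)).sub stronglyMeasurable_const
  | succ k =>
    exact (bddMeas_transitionIncr hg k).1.comp_measurable
      ((measurable_pastSigma X ((Nat.le_succ k).trans hkj)).prodMk (measurable_pastSigma X hkj))

variable [IsProbabilityMeasure μ]

lemma abs_martingaleDiff_le (hX : IsMarkovChain μ X P) (hg : ∀ j, BddMeas (g j))
    (hB : ∀ j x y, g j x - g j y ≤ B) (k : ℕ) (ω : Ω) : |martingaleDiff μ X P g k ω| ≤ B := by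
  have hosc : ∀ j x y, |g j x - g j y| ≤ B := fun j x y =>
    abs_sub_le_iff.2 ⟨hB j x y, hB j y x⟩
  cases k with
  | zero =>
    exact abs_sub_integral_le (u := fun ω => g 0 (X 0 ω))
      (((hg 0).comp (hX.measurable 0)).integrable μ) fun _ => hosc 0 _ _
  | succ k =>
    have := hX.isMarkovKernel k
    exact abs_sub_integral_le ((hg (k + 1)).integrable _) fun _ => hosc (k + 1) _ _

lemma integral_mul_martingaleDiff_succ (hX : IsMarkovChain μ X P) (hg : ∀ j, BddMeas (g j))
    (j : ℕ) {φ : Ω → ℝ} (hφ : BddMeas φ) (hφX : StronglyMeasurable[pastSigma X j] φ) :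
    ∫ ω, φ ω * martingaleDiff μ X P g (j + 1) ω ∂μ = 0 := by
  have := hX.isMarkovKernel
  have hzero : ∀ x, ∫ y, transitionIncr P g j (x, y) ∂P j x = 0 := fun x => by
    simp [transitionIncr, integral_sub ((hg (j + 1)).integrable (P j x)) (integrable_const _)]
  simp only [martingaleDiff, hX.integral_mul_prodMk j hφ hφX (bddMeas_transitionIncr hg j), hzero,
    mul_zero, integral_zero]

lemma integral_martingaleDiff (hX : IsMarkovChain μ X P) (hg : ∀ j, BddMeas (g j)) (k : ℕ) :
    ∫ ω, martingaleDiff μ X P g k ω ∂μ = 0 := by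
  cases k with
  | zero =>
    simp [martingaleDiff, integral_sub (((hg 0).comp (hX.measurable 0)).integrable μ)
      (integrable_const _)]
  | succ k =>
    simpa using hX.integral_mul_martingaleDiff_succ hg k (.const 1) stronglyMeasurable_const

lemma integral_martingaleDiff_mul_of_lt (hX : IsMarkovChain μ X P) (hg : ∀ j, BddMeas (g j))
    {i k : ℕ} (hik : i < k) :
    ∫ ω, martingaleDiff μ X P g i ω * martingaleDiff μ X P g k ω ∂μ = 0 := by
  obtain ⟨j, rfl⟩ := Nat.exists_eq_add_one_of_ne_zero hik.ne_bot
  exact hX.integral_mul_martingaleDiff_succ hg j (hX.bddMeas_martingaleDiff hg i)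
    (hX.stronglyMeasurable_martingaleDiff hg (Nat.le_of_lt_succ hik))

lemma variance_sum_martingaleDiff (hX : IsMarkovChain μ X P) (hg : ∀ j, BddMeas (g j))
    (s : Finset ℕ) :
    variance (fun ω => ∑ k ∈ s, martingaleDiff μ X P g k ω) μ
      = ∑ k ∈ s, lpNorm (martingaleDiff μ X P g k) 2 μ ^ 2 := by
  have hL2 : ∀ k, MemLp (martingaleDiff μ X P g k) 2 μ := fun k =>
    (hX.bddMeas_martingaleDiff hg k).memLp μ 2
  have hcov : ∀ i k, i ≠ k →
      cov[martingaleDiff μ X P g i, martingaleDiff μ X P g k; μ] = 0 := fun i k hik => by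
    rw [covariance_eq_sub (hL2 i) (hL2 k), hX.integral_martingaleDiff hg, zero_mul, sub_zero]
    rcases hik.lt_or_gt with h | h
    · exact hX.integral_martingaleDiff_mul_of_lt hg h
    · simpa only [Pi.mul_apply, mul_comm] using hX.integral_martingaleDiff_mul_of_lt hg h
  rw [variance_fun_sum' fun k _ => hL2 k]
  refine Finset.sum_congr rfl fun k hk => ?_
  rw [Finset.sum_eq_single_of_mem k hk fun i _ hik => hcov k i hik.symm,
    covariance_self (hL2 k).1.aemeasurable, sq_lpNorm_two (hL2 k).1,
    variance_of_integral_eq_zero (hL2 k).1.aemeasurable (hX.integral_martingaleDiff hg k)]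
  simp

end IsMarkovChain

end MartingaleDifferences

section TailMGF

variable {Ω : Type*} {mΩ : MeasurableSpace Ω} {𝒳 : ℕ → Type*} [∀ j, MeasurableSpace (𝒳 j)]
  {μ : Measure Ω} {X : ∀ j, Ω → 𝒳 j} {P : ∀ j, Kernel (𝒳 j) (𝒳 (j + 1))} {g : ∀ j, 𝒳 j → ℝ}
  {z : ℂ} {n : ℕ}

/-- The conditional exponential moment `E[exp (z * ∑ D k) | X j = x]` of the martingale
differences with `j < k < n`, computed by the backward recursion of the tilted transition
operators. -/
noncomputable def tailMGF (P : ∀ j, Kernel (𝒳 j) (𝒳 (j + 1))) (g : ∀ j, 𝒳 j → ℝ) (z : ℂ) (n : ℕ) :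
    ∀ j, 𝒳 j → ℂ :=
  backwardSol (fun j u x => ∫ y, Complex.exp (z * transitionIncr P g j (x, y)) * u y ∂P j x) 1 n

lemma tailMGF_of_le {j : ℕ} (h : n ≤ j) (x : 𝒳 j) : tailMGF P g z n j x = 1 := by
  rw [tailMGF, backwardSol_of_le h]

lemma tailMGF_eq_integral [∀ j, IsMarkovKernel (P j)] (hgn : ∀ j, n ≤ j → ∀ x, g j x = 0) (j : ℕ)
    (x : 𝒳 j) :
    tailMGF P g z n j x
      = ∫ y, Complex.exp (z * transitionIncr P g j (x, y)) * tailMGF P g z n (j + 1) y ∂P j x := by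
  rcases lt_or_ge j n with h | h
  · simp only [tailMGF, backwardSol_of_lt h]
  · have h' := h.trans (Nat.le_succ j)
    simp [tailMGF_of_le h, tailMGF_of_le h', transitionIncr, hgn _ h']

lemma BddMeas.cexp_mul_ofReal {α : Type*} [MeasurableSpace α] {u : α → ℝ} (hu : BddMeas u)
    (z : ℂ) : BddMeas (fun x => Complex.exp (z * u x)) :=
  ((BddMeas.const z).mul hu.ofReal).cexp

lemma bddMeas_cexp_transitionIncr_mul [∀ j, IsMarkovKernel (P j)] (hg : ∀ j, BddMeas (g j)) (z : ℂ)
    (j : ℕ) {u : 𝒳 (j + 1) → ℂ} (hu : BddMeas u) :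
    BddMeas fun p : 𝒳 j × 𝒳 (j + 1) => Complex.exp (z * transitionIncr P g j p) * u p.2 :=
  ((bddMeas_transitionIncr hg j).cexp_mul_ofReal z).mul (hu.comp measurable_snd)

lemma bddMeas_tailMGF [∀ j, IsMarkovKernel (P j)] (hg : ∀ j, BddMeas (g j)) (z : ℂ) (n j : ℕ) :
    BddMeas (tailMGF P g z n j) :=
  bddMeas_backwardSol
    (fun j _ hu => (bddMeas_cexp_transitionIncr_mul hg z j hu).kernel_prod (P j)) 1 n j

/-- The exponential moment `E[exp (z * ∑ D k)]` of the martingale differences with `j ≤ k < n`. -/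
noncomputable def tailExpMoment (μ : Measure Ω) (X : ∀ j, Ω → 𝒳 j)
    (P : ∀ j, Kernel (𝒳 j) (𝒳 (j + 1))) (g : ∀ j, 𝒳 j → ℝ) (z : ℂ) (n j : ℕ) : ℂ :=
  ∫ ω, Complex.exp (z * (∑ k ∈ Finset.Ico j n, martingaleDiff μ X P g k ω : ℝ)) ∂μ

lemma cexp_mul_sum_Ico (z : ℂ) {D : ℕ → ℝ} (hD : ∀ k, n ≤ k → D k = 0) (j : ℕ) :
    Complex.exp (z * (∑ k ∈ Finset.Ico j n, D k : ℝ))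
      = Complex.exp (z * D j) * Complex.exp (z * (∑ k ∈ Finset.Ico (j + 1) n, D k : ℝ)) := by
  rcases lt_or_ge j n with h | h
  · rw [← Complex.exp_add, ← mul_add, Finset.sum_eq_sum_Ico_succ_bot h, Complex.ofReal_add]
  · simp [Finset.Ico_eq_empty_of_le h, Finset.Ico_eq_empty_of_le (h.trans (Nat.le_succ j)), hD j h]

lemma IsMarkovChain.stronglyMeasurable_cexp_martingaleDiff (hX : IsMarkovChain μ X P)
    (hg : ∀ j, BddMeas (g j)) (z : ℂ) (j : ℕ) :
    StronglyMeasurable[pastSigma X j] fun ω => Complex.exp (z * martingaleDiff μ X P g j ω) :=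
  Complex.continuous_exp.comp_stronglyMeasurable <| stronglyMeasurable_const.mul <|
    Complex.continuous_ofReal.comp_stronglyMeasurable
      (hX.stronglyMeasurable_martingaleDiff hg le_rfl)

variable [IsProbabilityMeasure μ]

lemma tailExpMoment_of_le {j : ℕ} (h : n ≤ j) : tailExpMoment μ X P g z n j = 1 := by
  simp [tailExpMoment, Finset.Ico_eq_empty_of_le h]

namespace IsMarkovChain

lemma integral_mul_tailMGF (hX : IsMarkovChain μ X P) (hg : ∀ j, BddMeas (g j))
    (hgn : ∀ j, n ≤ j → ∀ x, g j x = 0) (z : ℂ) (j : ℕ) {φ : Ω → ℂ} (hφ : BddMeas φ)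
    (hφX : StronglyMeasurable[pastSigma X j] φ) :
    ∫ ω, φ ω * tailMGF P g z n j (X j ω) ∂μ
      = ∫ ω, φ ω * Complex.exp
          (z * (∑ k ∈ Finset.Ico (j + 1) n, martingaleDiff μ X P g k ω : ℝ)) ∂μ := by
  have := hX.isMarkovKernel
  induction h : n - j generalizing j φ with
  | zero =>
    have hn : n ≤ j := Nat.sub_eq_zero_iff_le.1 h
    simp [tailMGF_of_le hn, Finset.Ico_eq_empty_of_le (hn.trans (Nat.le_succ j))]
  | succ r ih =>
    calc ∫ ω, φ ω * tailMGF P g z n j (X j ω) ∂μ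
        = ∫ ω, φ ω * ∫ y, Complex.exp (z * transitionIncr P g j (X j ω, y))
            * tailMGF P g z n (j + 1) y ∂P j (X j ω) ∂μ := by
          simp only [← tailMGF_eq_integral hgn]
      _ = ∫ ω, φ ω * Complex.exp (z * martingaleDiff μ X P g (j + 1) ω)
            * tailMGF P g z n (j + 1) (X (j + 1) ω) ∂μ := by
          simp only [mul_assoc, martingaleDiff]
          exact (hX.integral_mul_prodMk j hφ hφX (bddMeas_cexp_transitionIncr_mul hg z j
            (bddMeas_tailMGF hg z n (j + 1)))).symm
      _ = _ := by
          rw [ih (j + 1) (hφ.mul ((hX.bddMeas_martingaleDiff hg (j + 1)).cexp_mul_ofReal z))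
            ((hφX.mono (pastSigma_mono X (Nat.le_succ j))).mul
              (hX.stronglyMeasurable_cexp_martingaleDiff hg z (j + 1))) (by omega)]
          simp only [cexp_mul_sum_Ico z (fun _ hk => martingaleDiff_eq_zero hgn hk _) (j + 1),
            mul_assoc]

lemma integral_tailMGF (hX : IsMarkovChain μ X P) (hg : ∀ j, BddMeas (g j))
    (hgn : ∀ j, n ≤ j → ∀ x, g j x = 0) (z : ℂ) (j : ℕ) :
    ∫ ω, tailMGF P g z n j (X j ω) ∂μ = tailExpMoment μ X P g z n (j + 1) := by
  simpa only [one_mul, tailExpMoment] using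
    hX.integral_mul_tailMGF hg hgn z j (.const 1) stronglyMeasurable_const

lemma integral_cexp_martingaleDiff_mul_tailMGF (hX : IsMarkovChain μ X P)
    (hg : ∀ j, BddMeas (g j)) (hgn : ∀ j, n ≤ j → ∀ x, g j x = 0) (z : ℂ) (j : ℕ) :
    ∫ ω, Complex.exp (z * martingaleDiff μ X P g j ω) * tailMGF P g z n j (X j ω) ∂μ
      = tailExpMoment μ X P g z n j := by
  rw [hX.integral_mul_tailMGF hg hgn z j ((hX.bddMeas_martingaleDiff hg j).cexp_mul_ofReal z)
    (hX.stronglyMeasurable_cexp_martingaleDiff hg z j), tailExpMoment]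
  simp only [cexp_mul_sum_Ico z (fun _ hk => martingaleDiff_eq_zero hgn hk _) j]

end IsMarkovChain

end TailMGF

section TailDev

variable {Ω : Type*} {mΩ : MeasurableSpace Ω} {𝒳 : ℕ → Type*} [∀ j, MeasurableSpace (𝒳 j)]
  {μ : Measure Ω} {X : ∀ j, Ω → 𝒳 j} {P : ∀ j, Kernel (𝒳 j) (𝒳 (j + 1))} {g : ∀ j, 𝒳 j → ℝ}
  {z : ℂ} {n j : ℕ} {B : ℝ}

/-- The relative deviation of `tailMGF` from its mean under the law of the chain, which is
`tailExpMoment` at `j + 1`. -/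
noncomputable def tailDev (μ : Measure Ω) (X : ∀ j, Ω → 𝒳 j) (P : ∀ j, Kernel (𝒳 j) (𝒳 (j + 1)))
    (g : ∀ j, 𝒳 j → ℝ) (z : ℂ) (n j : ℕ) (x : 𝒳 j) : ℂ :=
  tailMGF P g z n j x / tailExpMoment μ X P g z n (j + 1) - 1

/-- The relative change `F j / F (j + 1) - 1` of the exponential moments `F = tailExpMoment`. -/
noncomputable def tailGrowth (μ : Measure Ω) (X : ∀ j, Ω → 𝒳 j)
    (P : ∀ j, Kernel (𝒳 j) (𝒳 (j + 1))) (g : ∀ j, 𝒳 j → ℝ) (z : ℂ) (n j : ℕ) : ℂ :=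
  tailExpMoment μ X P g z n j / tailExpMoment μ X P g z n (j + 1) - 1

lemma bddMeas_tailDev [∀ j, IsMarkovKernel (P j)] (hg : ∀ j, BddMeas (g j)) (z : ℂ) (n j : ℕ) :
    BddMeas (tailDev μ X P g z n j) :=
  ((bddMeas_tailMGF hg z n j).mul (.const (tailExpMoment μ X P g z n (j + 1))⁻¹)).sub (.const 1)

lemma tailExpMoment_eq_mul_one_add_tailGrowth (hF : tailExpMoment μ X P g z n (j + 1) ≠ 0) :
    tailExpMoment μ X P g z n j
      = tailExpMoment μ X P g z n (j + 1) * (1 + tailGrowth μ X P g z n j) := by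
  rw [tailGrowth]
  field_simp
  ring

lemma tailMGF_eq_mul_one_add_tailDev (hF : tailExpMoment μ X P g z n (j + 1) ≠ 0) (x : 𝒳 j) :
    tailMGF P g z n j x
      = tailExpMoment μ X P g z n (j + 1) * (1 + tailDev μ X P g z n j x) := by
  rw [tailDev]
  field_simp
  ring

lemma stepDefect_tailDev_eq [∀ j, IsMarkovKernel (P j)] (hg : ∀ j, BddMeas (g j))
    (hgn : ∀ j, n ≤ j → ∀ x, g j x = 0) (hF : tailExpMoment μ X P g z n (j + 2) ≠ 0) (x : 𝒳 j) :
    stepDefect P (tailDev μ X P g z n) j x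
      = (1 + (∫ y, tailDev μ X P g z n (j + 1) y ∂P j x)
          + ∫ y, (Complex.exp (z * transitionIncr P g j (x, y)) - 1)
              * (1 + tailDev μ X P g z n (j + 1) y) ∂P j x) / (1 + tailGrowth μ X P g z n (j + 1))
        - (1 + ∫ y, tailDev μ X P g z n (j + 1) y ∂P j x) := by
  have hv := bddMeas_tailDev (μ := μ) (X := X) (P := P) hg z n (j + 1)
  have hW := ((bddMeas_transitionIncr (P := P) hg j).comp
    (measurable_prodMk_left (x := x))).cexp_mul_ofReal z
  have hsplit : 1 + (∫ y, tailDev μ X P g z n (j + 1) y ∂P j x)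
      + ∫ y, (Complex.exp (z * transitionIncr P g j (x, y)) - 1)
          * (1 + tailDev μ X P g z n (j + 1) y) ∂P j x
      = ∫ y, Complex.exp (z * transitionIncr P g j (x, y))
          * (1 + tailDev μ X P g z n (j + 1) y) ∂P j x := by
    have hone : 1 + ∫ y, tailDev μ X P g z n (j + 1) y ∂P j x
        = ∫ y, (1 + tailDev μ X P g z n (j + 1) y) ∂P j x := by
      rw [integral_add (integrable_const 1) (hv.integrable _)]
      simp
    rw [hone, ← integral_add (((BddMeas.const 1).add hv).integrable _)
      (((hW.sub (.const 1)).mul ((BddMeas.const 1).add hv)).integrable _)]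
    exact integral_congr_ae (ae_of_all _ fun y => by ring)
  rw [hsplit, stepDefect, tailDev, tailMGF_eq_integral hgn,
    tailExpMoment_eq_mul_one_add_tailGrowth (j := j + 1) hF]
  simp only [tailMGF_eq_mul_one_add_tailDev (j := j + 1) hF, mul_left_comm _
    (tailExpMoment μ X P g z n (j + 1 + 1)), integral_const_mul]
  rw [mul_div_mul_left _ _ hF]
  ring

variable [IsProbabilityMeasure μ]

lemma tailDev_of_le (h : n ≤ j) (x : 𝒳 j) : tailDev μ X P g z n j x = 0 := by
  simp [tailDev, tailMGF_of_le h, tailExpMoment_of_le (h.trans (Nat.le_succ j))]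

namespace IsMarkovChain

lemma integral_tailDev (hX : IsMarkovChain μ X P) (hg : ∀ j, BddMeas (g j))
    (hgn : ∀ j, n ≤ j → ∀ x, g j x = 0) (hF : tailExpMoment μ X P g z n (j + 1) ≠ 0) :
    ∫ ω, tailDev μ X P g z n j (X j ω) ∂μ = 0 := by
  have := hX.isMarkovKernel
  have hh := (bddMeas_tailMGF (P := P) hg z n j).comp (hX.measurable j)
  simp only [tailDev]
  rw [integral_sub ((hh.integrable μ).div_const _) (integrable_const 1), integral_div,
    hX.integral_tailMGF hg hgn, div_self hF]
  simp

lemma tailGrowth_eq_integral (hX : IsMarkovChain μ X P) (hg : ∀ j, BddMeas (g j))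
    (hgn : ∀ j, n ≤ j → ∀ x, g j x = 0) (hF : tailExpMoment μ X P g z n (j + 1) ≠ 0) :
    tailGrowth μ X P g z n j
      = ∫ ω, (Complex.exp (z * martingaleDiff μ X P g j ω) - 1)
          * (1 + tailDev μ X P g z n j (X j ω)) ∂μ := by
  have := hX.isMarkovKernel
  have hh := (bddMeas_tailMGF (P := P) hg z n j).comp (hX.measurable j)
  have hW := (hX.bddMeas_martingaleDiff hg j).cexp_mul_ofReal z
  have hrw : ∀ ω, (Complex.exp (z * martingaleDiff μ X P g j ω) - 1)
      * (1 + tailDev μ X P g z n j (X j ω))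
      = (Complex.exp (z * martingaleDiff μ X P g j ω) * tailMGF P g z n j (X j ω)
          - tailMGF P g z n j (X j ω)) / tailExpMoment μ X P g z n (j + 1) := fun ω => by
    rw [tailDev]
    ring
  simp only [hrw]
  rw [integral_div, integral_sub ((hW.mul hh).integrable μ) (hh.integrable μ),
    hX.integral_cexp_martingaleDiff_mul_tailMGF hg hgn, hX.integral_tailMGF hg hgn, sub_div,
    div_self hF, tailGrowth]

lemma norm_mul_martingaleDiff_le (hX : IsMarkovChain μ X P) (hg : ∀ j, BddMeas (g j))
    (hB : ∀ j x y, g j x - g j y ≤ B) (z : ℂ) (j : ℕ) (ω : Ω) :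
    ‖z * (martingaleDiff μ X P g j ω : ℂ)‖ ≤ ‖z‖ * B := by
  rw [norm_mul, Complex.norm_real]
  exact mul_le_mul_of_nonneg_left (hX.abs_martingaleDiff_le hg hB j ω) (norm_nonneg z)

lemma norm_tailGrowth_le (hX : IsMarkovChain μ X P) (hg : ∀ j, BddMeas (g j))
    (hgn : ∀ j, n ≤ j → ∀ x, g j x = 0) (hB : ∀ j x y, g j x - g j y ≤ B) (hzB : ‖z‖ * B ≤ 1)
    (hF : tailExpMoment μ X P g z n (j + 1) ≠ 0) :
    ‖tailGrowth μ X P g z n j‖ ≤ 2 * ‖z‖ * (lpNorm (martingaleDiff μ X P g j) 2 μ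
      + B * lpNorm (fun ω => tailDev μ X P g z n j (X j ω)) 2 μ) := by
  have := hX.isMarkovKernel
  have hD := hX.bddMeas_martingaleDiff hg j
  have hV := (bddMeas_tailDev (μ := μ) (X := X) (P := P) hg z n j).comp (hX.measurable j)
  rw [hX.tailGrowth_eq_integral hg hgn hF]
  refine (norm_integral_le_lpNorm_two
    (((hD.cexp_mul_ofReal z).sub (.const 1)).mul ((BddMeas.const 1).add hV))).trans ?_
  refine (lpNorm_cexp_sub_one_mul_le ((BddMeas.const z).mul hD.ofReal)
    (hX.norm_mul_martingaleDiff_le hg hB z j) hzB hV one_le_two).trans_eq ?_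
  rw [lpNorm_const_mul_ofReal z hD]
  ring

lemma norm_tailGrowth_le_sq_add_sq (hX : IsMarkovChain μ X P) (hg : ∀ j, BddMeas (g j))
    (hgn : ∀ j, n ≤ j → ∀ x, g j x = 0) (hB : ∀ j x y, g j x - g j y ≤ B) (hzB : ‖z‖ * B ≤ 1)
    (hF : tailExpMoment μ X P g z n (j + 1) ≠ 0) :
    ‖tailGrowth μ X P g z n j‖ ≤ 2 * (‖z‖ * lpNorm (martingaleDiff μ X P g j) 2 μ) ^ 2
      + lpNorm (fun ω => tailDev μ X P g z n j (X j ω)) 2 μ ^ 2 := by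
  have := hX.isMarkovKernel
  have hD := hX.bddMeas_martingaleDiff hg j
  have hV := (bddMeas_tailDev (μ := μ) (X := X) (P := P) hg z n j).comp (hX.measurable j)
  have hzD0 : ∫ ω, z * (martingaleDiff μ X P g j ω : ℂ) ∂μ = 0 := by
    rw [integral_const_mul, integral_complex_ofReal, hX.integral_martingaleDiff hg]
    simp
  rw [hX.tailGrowth_eq_integral hg hgn hF, ← lpNorm_const_mul_ofReal z hD]
  exact norm_integral_cexp_sub_one_mul_le ((BddMeas.const z).mul hD.ofReal)
    (fun ω => (hX.norm_mul_martingaleDiff_le hg hB z j ω).trans hzB) hzD0 hV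
lemma norm_tailGrowth_le_half (hX : IsMarkovChain μ X P) (hg : ∀ j, BddMeas (g j))
    (hgn : ∀ j, n ≤ j → ∀ x, g j x = 0) (hB : ∀ j x y, g j x - g j y ≤ B)
    (hzB : ‖z‖ * B ≤ 1 / 24) (hF : tailExpMoment μ X P g z n (j + 1) ≠ 0)
    (ha : lpNorm (fun ω => tailDev μ X P g z n j (X j ω)) 2 μ ≤ 1) :
    ‖tailGrowth μ X P g z n j‖ ≤ 1 / 2 := by
  have hd : lpNorm (martingaleDiff μ X P g j) 2 μ ≤ B :=
    lpNorm_le_of_forall_norm_le one_le_two (hX.abs_martingaleDiff_le hg hB j)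
  have hB0 : 0 ≤ B := lpNorm_nonneg.trans hd
  calc ‖tailGrowth μ X P g z n j‖
      ≤ 2 * ‖z‖ * (lpNorm (martingaleDiff μ X P g j) 2 μ
          + B * lpNorm (fun ω => tailDev μ X P g z n j (X j ω)) 2 μ) :=
        hX.norm_tailGrowth_le hg hgn hB (by linarith) hF
    _ ≤ 2 * ‖z‖ * (B + B * 1) := by gcongr
    _ ≤ 1 / 2 := by linarith

lemma lpNorm_stepDefect_tailDev_le (hX : IsMarkovChain μ X P) (hg : ∀ j, BddMeas (g j))
    (hgn : ∀ j, n ≤ j → ∀ x, g j x = 0) (hB : ∀ j x y, g j x - g j y ≤ B)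
    (hzB : ‖z‖ * B ≤ 1 / 24) (hF : tailExpMoment μ X P g z n (j + 2) ≠ 0)
    (ha : lpNorm (fun ω => tailDev μ X P g z n (j + 1) (X (j + 1) ω)) 2 μ ≤ 1) :
    lpNorm (fun ω => stepDefect P (tailDev μ X P g z n) j (X j ω)) 2 μ
      ≤ 12 * ‖z‖ * (lpNorm (martingaleDiff μ X P g (j + 1)) 2 μ
        + B * lpNorm (fun ω => tailDev μ X P g z n (j + 1) (X (j + 1) ω)) 2 μ) := by
  have := hX.isMarkovKernel
  have hzB1 : ‖z‖ * B ≤ 1 := by linarith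
  have hD := hX.bddMeas_martingaleDiff hg (j + 1)
  have hv := bddMeas_tailDev (μ := μ) (X := X) (P := P) hg z n (j + 1)
  have hΨ : BddMeas fun p : 𝒳 j × 𝒳 (j + 1) =>
      (Complex.exp (z * transitionIncr P g j p) - 1) * (1 + tailDev μ X P g z n (j + 1) p.2) :=
    (((bddMeas_transitionIncr hg j).cexp_mul_ofReal z).sub (.const 1)).mul
      ((BddMeas.const 1).add (hv.comp measurable_snd))
  have hQ : lpNorm (fun ω => ∫ y, tailDev μ X P g z n (j + 1) y ∂P j (X j ω)) 2 μ ≤ 1 :=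
    (hX.lpNorm_integral_prodMk_le j (hv.comp measurable_snd) one_le_two).trans ha
  have hq := (hX.lpNorm_integral_prodMk_le j hΨ one_le_two).trans
    (lpNorm_cexp_sub_one_mul_le ((BddMeas.const z).mul hD.ofReal)
      (hX.norm_mul_martingaleDiff_le hg hB z (j + 1)) hzB1 (hv.comp (hX.measurable (j + 1)))
      one_le_two)
  rw [lpNorm_const_mul_ofReal z hD] at hq
  simp only [stepDefect_tailDev_eq hg hgn hF]
  refine (lpNorm_one_add_add_div_sub_le ((hΨ.kernel_prod (P j)).comp (hX.measurable j)) one_le_two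
    (hX.norm_tailGrowth_le_half hg hgn hB hzB hF ha)
    (hX.norm_tailGrowth_le hg hgn hB hzB1 hF) (hq.trans_eq (by ring)) hQ).trans_eq (by ring)

end IsMarkovChain

end TailDev

section LogGrowth

variable {Ω : Type*} {mΩ : MeasurableSpace Ω} {𝒳 : ℕ → Type*} [∀ j, MeasurableSpace (𝒳 j)]
  {μ : Measure Ω} [IsProbabilityMeasure μ] {X : ∀ j, Ω → 𝒳 j}
  {P : ∀ j, Kernel (𝒳 j) (𝒳 (j + 1))} {g : ∀ j, 𝒳 j → ℝ} {m : ∀ j, Measure (𝒳 j)}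
  [∀ j, IsProbabilityMeasure (m j)] {n n₀ : ℕ} {γ B : ℝ} {z : ℂ}

namespace IsMarkovChain

lemma tailExpMoment_ne_zero_and_lpNorm_tailDev_le_one (hX : IsMarkovChain μ X P)
    (hD : DoeblinMinorization P n₀ γ m) (hn₀ : 0 < n₀) (hγ : 0 ≤ γ) (hg : ∀ j, BddMeas (g j))
    (hgn : ∀ j, n ≤ j → ∀ x, g j x = 0) (hB : ∀ j x y, g j x - g j y ≤ B)
    (hzB : ‖z‖ * B ≤ 1 / 24) (hsmall : 24 * n₀ * (‖z‖ * B) ≤ 1 - √(1 - γ)) (j : ℕ) :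
    tailExpMoment μ X P g z n j ≠ 0
      ∧ lpNorm (fun ω => tailDev μ X P g z n j (X j ω)) 2 μ ≤ 1 := by
  have := hX.isMarkovKernel
  have hd : ∀ k, lpNorm (martingaleDiff μ X P g k) 2 μ ≤ B := fun k =>
    lpNorm_le_of_forall_norm_le one_le_two (hX.abs_martingaleDiff_le hg hB k)
  have hB0 : 0 ≤ B := lpNorm_nonneg.trans (hd 0)
  induction j using Nat.strong_decreasing_induction with
  | base =>
    refine ⟨n, fun j hj => ⟨?_, ?_⟩⟩
    · simp [tailExpMoment_of_le hj.le]
    · simp [tailDev_of_le hj.le]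
  | step j ih =>
    have hdefect : ∀ i, lpNorm (fun ω => stepDefect P (tailDev μ X P g z n) (j + i) (X (j + i) ω))
        2 μ ≤ 24 * (‖z‖ * B) := fun i => by
      have ha := (ih (j + i + 1) (by omega)).2
      calc _ ≤ 12 * ‖z‖ * (lpNorm (martingaleDiff μ X P g (j + i + 1)) 2 μ
            + B * lpNorm (fun ω => tailDev μ X P g z n (j + i + 1) (X (j + i + 1) ω)) 2 μ) :=
            hX.lpNorm_stepDefect_tailDev_le hg hgn hB hzB (ih (j + i + 2) (by omega)).1 ha
        _ ≤ 12 * ‖z‖ * (B + B * 1) := by gcongr; exact hd _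
        _ = 24 * (‖z‖ * B) := by ring
    have ha : lpNorm (fun ω => tailDev μ X P g z n j (X j ω)) 2 μ ≤ 1 :=
      calc _ ≤ _ := hX.lpNorm_le_sum_lpNorm_stepDefect_add hD hγ (bddMeas_tailDev hg z n) j
            (hX.integral_tailDev hg hgn (ih (j + n₀ + 1) (by omega)).1)
        _ ≤ ∑ _i ∈ Finset.range n₀, 24 * (‖z‖ * B) + √(1 - γ) * 1 :=
          add_le_add (Finset.sum_le_sum fun i _ => hdefect i)
            (mul_le_mul_of_nonneg_left (ih (j + n₀) (by omega)).2 (Real.sqrt_nonneg _))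
        _ ≤ 1 := by
          rw [Finset.sum_const, Finset.card_range, nsmul_eq_mul]
          linarith
    have hF := (ih (j + 1) (by omega)).1
    have hhalf := half_le_norm_one_add (hX.norm_tailGrowth_le_half hg hgn hB hzB hF ha)
    refine ⟨?_, ha⟩
    rw [tailExpMoment_eq_mul_one_add_tailGrowth hF]
    exact mul_ne_zero hF (norm_pos_iff.1 (by linarith))

lemma sum_sq_lpNorm_tailDev_le (hX : IsMarkovChain μ X P) (hD : DoeblinMinorization P n₀ γ m)
    (hn₀ : 0 < n₀) (hγ : 0 < γ) (hg : ∀ j, BddMeas (g j)) (hgn : ∀ j, n ≤ j → ∀ x, g j x = 0)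
    (hB1 : 1 ≤ B) (hB : ∀ j x y, g j x - g j y ≤ B) (hzB : ‖z‖ * B ≤ 1 / 24)
    (hsmall : 24 * n₀ * (‖z‖ * B) ≤ 1 - √(1 - γ)) :
    ∑ j ∈ Finset.range n, lpNorm (fun ω => tailDev μ X P g z n j (X j ω)) 2 μ ^ 2
      ≤ ∑ j ∈ Finset.range n, lpNorm (martingaleDiff μ X P g j) 2 μ ^ 2 := by
  have := hX.isMarkovKernel
  have hbound := hX.tailExpMoment_ne_zero_and_lpNorm_tailDev_le_one hD hn₀ hγ.le hg hgn hB hzB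
    hsmall
  refine sum_sq_le_sum_sq_of_contracting_recursion (n₀ := n₀) (ρ := √(1 - γ))
    (θ := 12 * ‖z‖ * B) (a := fun j => lpNorm (fun ω => tailDev μ X P g z n j (X j ω)) 2 μ)
    (b := fun j => lpNorm (fun ω => stepDefect P (tailDev μ X P g z n) j (X j ω)) 2 μ)
    (Real.sqrt_nonneg _) ?_ (by positivity) (by linarith)
    (fun _ => lpNorm_nonneg) (fun _ => lpNorm_nonneg) (fun j hj => ?_) (fun j hj => ?_)
    (fun j => hX.lpNorm_le_sum_lpNorm_stepDefect_add hD hγ.le (bddMeas_tailDev hg z n) j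
      (hX.integral_tailDev hg hgn (hbound _).1)) (fun j => ?_)
  · rw [Real.sqrt_lt' one_pos]
    linarith
  · simp only [tailDev_of_le hj, lpNorm_fun_zero]
  · simp only [show martingaleDiff μ X P g j = 0 from funext (martingaleDiff_eq_zero hgn hj),
      lpNorm_zero]
  · have hd0 : 0 ≤ lpNorm (martingaleDiff μ X P g (j + 1)) 2 μ := lpNorm_nonneg
    refine (hX.lpNorm_stepDefect_tailDev_le hg hgn hB hzB (hbound (j + 2)).1
      (hbound (j + 1)).2).trans ?_
    rw [mul_assoc (12 * ‖z‖), mul_add B]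
    gcongr
    exact le_mul_of_one_le_left hd0 hB1

lemma sum_norm_tailGrowth_le (hX : IsMarkovChain μ X P) (hD : DoeblinMinorization P n₀ γ m)
    (hn₀ : 0 < n₀) (hγ : 0 < γ) (hg : ∀ j, BddMeas (g j)) (hgn : ∀ j, n ≤ j → ∀ x, g j x = 0)
    (hB1 : 1 ≤ B) (hB : ∀ j x y, g j x - g j y ≤ B) (hzB : ‖z‖ * B ≤ 1 / 24)
    (hsmall : 24 * n₀ * (‖z‖ * B) ≤ 1 - √(1 - γ)) :
    ∑ j ∈ Finset.range n, ‖tailGrowth μ X P g z n j‖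
      ≤ 2 * variance (fun ω => ∑ k ∈ Finset.range n, martingaleDiff μ X P g k ω) μ := by
  have hbound := hX.tailExpMoment_ne_zero_and_lpNorm_tailDev_le_one hD hn₀ hγ.le hg hgn hB hzB
    hsmall
  have hz : ‖z‖ ≤ 1 / 24 := (le_mul_of_one_le_right (norm_nonneg z) hB1).trans hzB
  have hz2 : 2 * ‖z‖ ^ 2 ≤ 1 := by nlinarith [norm_nonneg z]
  have hterm : ∀ j, ‖tailGrowth μ X P g z n j‖ ≤ lpNorm (martingaleDiff μ X P g j) 2 μ ^ 2
      + lpNorm (fun ω => tailDev μ X P g z n j (X j ω)) 2 μ ^ 2 := fun j => by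
    refine (hX.norm_tailGrowth_le_sq_add_sq hg hgn hB (by linarith) (hbound (j + 1)).1).trans ?_
    rw [mul_pow, ← mul_assoc]
    gcongr
    exact mul_le_of_le_one_left (sq_nonneg _) hz2
  rw [hX.variance_sum_martingaleDiff hg, two_mul]
  refine (Finset.sum_le_sum fun j _ => hterm j).trans ?_
  rw [Finset.sum_add_distrib]
  exact add_le_add_right (hX.sum_sq_lpNorm_tailDev_le hD hn₀ hγ hg hgn hB1 hB hzB hsmall) _

end IsMarkovChain

end LogGrowth

section HolomorphicLog

variable {ι : Type*} {s : Finset ι}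

lemma differentiableOn_sum_log_one_add {U : Set ℂ} {ε : ι → ℂ → ℂ}
    (hε : ∀ i ∈ s, DifferentiableOn ℂ (ε i) U) (hε1 : ∀ i ∈ s, ∀ z ∈ U, ‖ε i z‖ < 1) :
    DifferentiableOn ℂ (fun z => ∑ i ∈ s, Complex.log (1 + ε i z)) U :=
  DifferentiableOn.fun_sum fun i hi => ((hε i hi).const_add 1).clog fun z hz =>
    Complex.mem_slitPlane_of_norm_lt_one (hε1 i hi z hz)

lemma exp_sum_log_one_add {ε : ι → ℂ} (hε1 : ∀ i ∈ s, ‖ε i‖ < 1) :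
    Complex.exp (∑ i ∈ s, Complex.log (1 + ε i)) = ∏ i ∈ s, (1 + ε i) := by
  rw [Complex.exp_sum]
  exact Finset.prod_congr rfl fun i hi => Complex.exp_log <|
    Complex.slitPlane_ne_zero (Complex.mem_slitPlane_of_norm_lt_one (hε1 i hi))

lemma norm_sum_log_one_add_le {ε : ι → ℂ} (hε : ∀ i ∈ s, ‖ε i‖ ≤ 1 / 2) :
    ‖∑ i ∈ s, Complex.log (1 + ε i)‖ ≤ 3 / 2 * ∑ i ∈ s, ‖ε i‖ := by
  rw [Finset.mul_sum]
  exact norm_sum_le_of_le s fun i hi => Complex.norm_log_one_add_half_le_self (hε i hi)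

variable {Ω : Type*} {mΩ : MeasurableSpace Ω} {μ : Measure Ω}

lemma BddMeas.differentiable_integral_cexp [IsFiniteMeasure μ] {Z : Ω → ℝ} (hZ : BddMeas Z) :
    Differentiable ℂ (fun z : ℂ => ∫ ω, Complex.exp (z * Z ω) ∂μ) := fun z => by
  obtain ⟨hZm, C, hC⟩ := hZ
  have hexp : ∀ t, Integrable (fun ω => Real.exp (t * Z ω)) μ := fun t =>
    Integrable.of_bound
      (Real.continuous_exp.comp_stronglyMeasurable (hZm.const_mul t)).aestronglyMeasurable
      (Real.exp (|t| * C)) (ae_of_all _ fun ω => by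
        rw [Real.norm_eq_abs, Real.abs_exp, Real.exp_le_exp]
        refine (le_abs_self _).trans ?_
        rw [abs_mul]
        exact mul_le_mul_of_nonneg_left (hC ω) (abs_nonneg t))
  have huniv : integrableExpSet Z μ = Set.univ := Set.eq_univ_of_forall hexp
  exact (hasDerivAt_complexMGF (X := Z) (μ := μ) (z := z) (by simp [huniv])).differentiableAt

variable [IsProbabilityMeasure μ] {𝒳 : ℕ → Type*} [∀ j, MeasurableSpace (𝒳 j)]
  {X : ∀ j, Ω → 𝒳 j} {P : ∀ j, Kernel (𝒳 j) (𝒳 (j + 1))} {g : ∀ j, 𝒳 j → ℝ}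
  {m : ∀ j, Measure (𝒳 j)} [∀ j, IsProbabilityMeasure (m j)] {n n₀ : ℕ} {γ B : ℝ}

lemma tailExpMoment_zero_eq_prod {z : ℂ} (hF : ∀ j, tailExpMoment μ X P g z n j ≠ 0) :
    tailExpMoment μ X P g z n 0 = ∏ j ∈ Finset.range n, (1 + tailGrowth μ X P g z n j) := by
  have hprod : ∀ r, tailExpMoment μ X P g z n 0 = tailExpMoment μ X P g z n r
      * ∏ j ∈ Finset.range r, (1 + tailGrowth μ X P g z n j) := fun r => by
    induction r with
    | zero => simp
    | succ r ih =>
      rw [ih, tailExpMoment_eq_mul_one_add_tailGrowth (hF (r + 1)), Finset.prod_range_succ]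
      ring
  rw [hprod n, tailExpMoment_of_le le_rfl, one_mul]

lemma tailGrowth_at_zero (j : ℕ) : tailGrowth μ X P g 0 n j = 0 := by
  simp [tailGrowth, tailExpMoment]

namespace IsMarkovChain

lemma differentiable_tailExpMoment (hX : IsMarkovChain μ X P) (hg : ∀ j, BddMeas (g j))
    (n j : ℕ) : Differentiable ℂ fun z => tailExpMoment μ X P g z n j :=
  (BddMeas.sum (Finset.Ico j n)
    fun k _ => hX.bddMeas_martingaleDiff hg k).differentiable_integral_cexp

lemma exists_log_tailExpMoment (hX : IsMarkovChain μ X P) (hD : DoeblinMinorization P n₀ γ m)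
    (hn₀ : 0 < n₀) (hγ : 0 < γ) (hg : ∀ j, BddMeas (g j)) (hgn : ∀ j, n ≤ j → ∀ x, g j x = 0)
    (hB1 : 1 ≤ B) (hB : ∀ j x y, g j x - g j y ≤ B) {δ : ℝ} (hδB : δ * B ≤ 1 / 24)
    (hδ : 24 * n₀ * (δ * B) ≤ 1 - √(1 - γ)) :
    ∃ L : ℂ → ℂ, L 0 = 0 ∧ DifferentiableOn ℂ L (Metric.ball 0 δ)
      ∧ (∀ z ∈ Metric.ball 0 δ, Complex.exp (L z) = tailExpMoment μ X P g z n 0)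
      ∧ ∀ z ∈ Metric.ball 0 δ, ‖L z‖
        ≤ 3 * variance (fun ω => ∑ k ∈ Finset.range n, martingaleDiff μ X P g k ω) μ := by
  have hzδ : ∀ z ∈ Metric.ball (0 : ℂ) δ, ‖z‖ * B ≤ δ * B := fun z hz =>
    mul_le_mul_of_nonneg_right (mem_ball_zero_iff.1 hz).le (zero_le_one.trans hB1)
  have hzB : ∀ z ∈ Metric.ball (0 : ℂ) δ, ‖z‖ * B ≤ 1 / 24 := fun z hz => (hzδ z hz).trans hδB
  have hsmall : ∀ z ∈ Metric.ball (0 : ℂ) δ, 24 * n₀ * (‖z‖ * B) ≤ 1 - √(1 - γ) := fun z hz =>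
    (mul_le_mul_of_nonneg_left (hzδ z hz) (by positivity)).trans hδ
  have hbound := fun z hz => hX.tailExpMoment_ne_zero_and_lpNorm_tailDev_le_one hD hn₀ hγ.le hg
    hgn hB (hzB z hz) (hsmall z hz)
  have hhalf : ∀ z ∈ Metric.ball (0 : ℂ) δ, ∀ j, ‖tailGrowth μ X P g z n j‖ ≤ 1 / 2 := fun z hz j =>
    hX.norm_tailGrowth_le_half hg hgn hB (hzB z hz) (hbound z hz _).1 (hbound z hz j).2
  have hlt : ∀ z ∈ Metric.ball (0 : ℂ) δ, ∀ j, ‖tailGrowth μ X P g z n j‖ < 1 := fun z hz j =>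
    (hhalf z hz j).trans_lt (by norm_num)
  have hdiff : ∀ j, DifferentiableOn ℂ (fun z => tailExpMoment μ X P g z n j) (Metric.ball 0 δ) :=
    fun j => (hX.differentiable_tailExpMoment hg n j).differentiableOn
  refine ⟨fun z => ∑ j ∈ Finset.range n, Complex.log (1 + tailGrowth μ X P g z n j),
    by simp [tailGrowth_at_zero], differentiableOn_sum_log_one_add
      (fun j _ => ((hdiff j).div (hdiff (j + 1)) fun z hz => (hbound z hz _).1).sub_const 1)
      fun j _ z hz => hlt z hz j, fun z hz => ?_, fun z hz => ?_⟩
  · rw [exp_sum_log_one_add fun j _ => hlt z hz j, tailExpMoment_zero_eq_prod fun j =>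
      (hbound z hz j).1]
  · refine (norm_sum_log_one_add_le fun j _ => hhalf z hz j).trans ?_
    linarith [hX.sum_norm_tailGrowth_le hD hn₀ hγ hg hgn hB1 hB (hzB z hz) (hsmall z hz)]

lemma sum_martingaleDiff_tailMean (hX : IsMarkovChain μ X P) {f : ∀ j, 𝒳 j → ℝ}
    (hf : ∀ j, BddMeas (f j)) (n : ℕ) (ω : Ω) :
    ∑ k ∈ Finset.range n, martingaleDiff μ X P (tailMean P f n) k ω
      = partialSum X f n ω - ∫ ω', partialSum X f n ω' ∂μ := by
  have := hX.isMarkovKernel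
  have hg := bddMeas_tailMean (P := P) hf n
  have hS : ∀ ω, partialSum X f n ω = (∫ ω', tailMean P f n 0 (X 0 ω') ∂μ)
      + ∑ k ∈ Finset.range n, martingaleDiff μ X P (tailMean P f n) k ω := fun ω => by
    rw [← sum_stepDefect_eq_integral_add_sum_martingaleDiff fun j hj x => tailMean_of_le hj x]
    exact Finset.sum_congr rfl fun j hj =>
      (stepDefect_tailMean_of_lt (Finset.mem_range.1 hj) _).symm
  simp only [hS]
  rw [integral_add (integrable_const _)
      (integrable_finsetSum _ fun k _ => (hX.bddMeas_martingaleDiff hg k).integrable μ),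
    integral_finsetSum _ fun k _ => (hX.bddMeas_martingaleDiff hg k).integrable μ]
  simp [hX.integral_martingaleDiff hg]

end IsMarkovChain

end HolomorphicLog

section RestrictionToLine

variable {L : ℂ → ℂ} {U : Set ℂ}

lemma iteratedDeriv_comp_mul_ofReal (hU : IsOpen U) (hL : DifferentiableOn ℂ L U) (c : ℂ) (s : ℕ)
    {t : ℝ} (ht : c * t ∈ U) :
    iteratedDeriv s (fun t : ℝ => L (c * t)) t = c ^ s * iteratedDeriv s L (c * t) := by
  induction s generalizing t with
  | zero => simp
  | succ s ih =>
    have hev : iteratedDeriv s (fun t : ℝ => L (c * t))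
        =ᶠ[nhds t] fun t : ℝ => c ^ s * iteratedDeriv s L (c * t) := by
      have hcont : Continuous fun t : ℝ => c * (t : ℂ) := by fun_prop
      exact ((hU.preimage hcont).mem_nhds ht |> Filter.eventually_of_mem) fun _ => ih
    have hderiv : HasDerivAt (iteratedDeriv s L) (iteratedDeriv (s + 1) L (c * t)) (c * t) := by
      rw [iteratedDeriv_succ, iteratedDeriv_eq_iterate]
      exact ((hL.analyticAt (hU.mem_nhds ht)).iterated_deriv s).differentiableAt.hasDerivAt
    have hlin : HasDerivAt (fun w : ℂ => c * w) c (t : ℂ) := by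
      simpa using (hasDerivAt_id (t : ℂ)).const_mul c
    have hcomp : HasDerivAt (fun w : ℂ => iteratedDeriv s L (c * w))
        (iteratedDeriv (s + 1) L (c * t) * c) (t : ℂ) :=
      HasDerivAt.comp (t : ℂ) (h₂ := iteratedDeriv s L) hderiv hlin
    rw [iteratedDeriv_succ, hev.deriv_eq, (hcomp.comp_ofReal.const_mul (c ^ s)).deriv]
    ring

lemma contDiffOn_comp_mul_ofReal (hU : IsOpen U) (hL : DifferentiableOn ℂ L U) (c : ℂ)
    {k : WithTop ℕ∞} :
    ContDiffOn ℝ k (fun t : ℝ => L (c * t)) ((fun t : ℝ => c * (t : ℂ)) ⁻¹' U) :=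
  ((hL.contDiffOn hU).restrict_scalars ℝ).comp
    (contDiff_const.mul Complex.ofRealCLM.contDiff).contDiffOn fun _ ht => ht

lemma norm_iteratedDeriv_comp_mul_ofReal_le {c : ℂ} (hc : ‖c‖ ≤ 1) {r ρ M : ℝ} (hρ : 0 < ρ)
    (hL : DifferentiableOn ℂ L (Metric.ball 0 (r + ρ)))
    (hM : ∀ z ∈ Metric.ball (0 : ℂ) (r + ρ), ‖L z‖ ≤ M) (s : ℕ) {t : ℝ} (ht : |t| < r) :
    ‖iteratedDeriv s (fun t : ℝ => L (c * t)) t‖ ≤ s.factorial * M / ρ ^ s := by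
  have hct : ‖c * (t : ℂ)‖ < r := by
    rw [norm_mul, Complex.norm_real]
    exact (mul_le_of_le_one_left (norm_nonneg _) hc).trans_lt ht
  have hsub : Metric.closedBall (c * (t : ℂ)) ρ ⊆ Metric.ball 0 (r + ρ) :=
    Metric.closedBall_subset_ball' (by rw [dist_zero_right]; linarith)
  rw [iteratedDeriv_comp_mul_ofReal Metric.isOpen_ball hL c s
    (hsub (Metric.mem_closedBall_self hρ.le)), norm_mul, norm_pow]
  refine (mul_le_of_le_one_left (norm_nonneg _) (pow_le_one₀ (norm_nonneg c) hc)).trans ?_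
  exact Complex.norm_iteratedDeriv_le_of_forall_mem_sphere_norm_le s hρ
    ((hL.mono hsub).diffContOnCl_ball subset_rfl)
    fun z hz => hM z (hsub (Metric.sphere_subset_closedBall hz))

lemma exists_forall_norm_iteratedDeriv_comp_mul_ofReal_le {r ρ : ℝ} (hρ : 0 < ρ) (k : ℕ) :
    ∃ C : ℝ, 0 < C ∧ ∀ (L : ℂ → ℂ) (c : ℂ) (M : ℝ), ‖c‖ ≤ 1 →
      DifferentiableOn ℂ L (Metric.ball 0 (r + ρ)) →
      (∀ z ∈ Metric.ball (0 : ℂ) (r + ρ), ‖L z‖ ≤ M) →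
      ∀ s ≤ k, ∀ t : ℝ, |t| < r → ‖iteratedDeriv s (fun t : ℝ => L (c * t)) t‖ ≤ C * M := by
  refine ⟨∑ s ∈ Finset.range (k + 1), s.factorial / ρ ^ s,
    Finset.sum_pos (fun s _ => by positivity) (by simp), fun L c M hc hL hM s hs t ht => ?_⟩
  have hM0 : 0 ≤ M := (norm_nonneg _).trans <| hM 0 <| Metric.mem_ball_self <| by
    linarith [abs_nonneg t]
  calc ‖iteratedDeriv s (fun t : ℝ => L (c * t)) t‖
      ≤ s.factorial * M / ρ ^ s := norm_iteratedDeriv_comp_mul_ofReal_le hc hρ hL hM s ht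
    _ = s.factorial / ρ ^ s * M := by ring
    _ ≤ (∑ s ∈ Finset.range (k + 1), s.factorial / ρ ^ s) * M :=
      mul_le_mul_of_nonneg_right (Finset.single_le_sum (f := fun s : ℕ => s.factorial / ρ ^ s)
        (fun s _ => by positivity) (Finset.mem_range_succ_iff.2 hs)) hM0

end RestrictionToLine

section PartialSums

variable {Ω : Type*} [MeasurableSpace Ω] {μ : Measure Ω} {𝒳 : ℕ → Type*}
  [∀ j, MeasurableSpace (𝒳 j)] {X : ∀ j, Ω → 𝒳 j} {f : ∀ j, 𝒳 j → ℝ} {K : ℝ}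

lemma centeredCharFun_congr {Y Z : Ω → ℝ} (h : Y =ᵐ[μ] Z) (t : ℝ) :
    centeredCharFun μ Y t = centeredCharFun μ Z t := by
  rw [centeredCharFun, centeredCharFun, integral_congr_ae h]
  refine integral_congr_ae ?_
  filter_upwards [h] with ω hω
  rw [hω]

lemma exists_bddMeas_partialSum_ae_eq (hf : ∀ j, Measurable (f j)) (hK0 : 0 ≤ K)
    (hK : ∀ j, ∀ᵐ ω ∂μ, |f j (X j ω)| ≤ K) :
    ∃ F : ∀ j, 𝒳 j → ℝ, (∀ j, BddMeas (F j)) ∧ (∀ j x, |F j x| ≤ K)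
      ∧ ∀ n, partialSum X F n =ᵐ[μ] partialSum X f n := by
  have hFK : ∀ j (x : 𝒳 j), |max (-K) (min K (f j x))| ≤ K := fun j x =>
    abs_le.2 ⟨le_max_left _ _, max_le (neg_le_self hK0) (min_le_left _ _)⟩
  refine ⟨fun j x => max (-K) (min K (f j x)), fun j =>
    ⟨(measurable_const.max (measurable_const.min (hf j))).stronglyMeasurable, K, hFK j⟩, hFK,
    fun n => ?_⟩
  filter_upwards [ae_all_iff.2 hK] with ω hω
  refine Finset.sum_congr rfl fun j _ => ?_
  simp only [min_eq_right (abs_le.1 (hω j)).2, max_eq_right (abs_le.1 (hω j)).1]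

variable [IsProbabilityMeasure μ] {P : ∀ j, Kernel (𝒳 j) (𝒳 (j + 1))} {m : ∀ j, Measure (𝒳 j)}
  [∀ j, IsProbabilityMeasure (m j)] {n₀ : ℕ} {γ : ℝ}

lemma IsMarkovChain.exists_log_integral_cexp_partialSum (hX : IsMarkovChain μ X P)
    (hD : DoeblinMinorization P n₀ γ m) (hn₀ : 0 < n₀) (hγ : 0 < γ) (hf : ∀ j, BddMeas (f j))
    (hK0 : 0 ≤ K) (hK : ∀ j x, |f j x| ≤ K) :
    ∃ δ : ℝ, 0 < δ ∧ ∀ n, ∃ L : ℂ → ℂ, L 0 = 0 ∧ DifferentiableOn ℂ L (Metric.ball 0 δ)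
      ∧ (∀ z ∈ Metric.ball 0 δ, Complex.exp (L z)
        = ∫ ω, Complex.exp (z * (partialSum X f n ω - ∫ ω', partialSum X f n ω' ∂μ : ℝ)) ∂μ)
      ∧ ∀ z ∈ Metric.ball 0 δ, ‖L z‖ ≤ 3 * variance (partialSum X f n) μ := by
  have := hX.isMarkovKernel
  have hn₀' : (1 : ℝ) ≤ n₀ := by exact_mod_cast hn₀
  set B : ℝ := max 1 (2 * K * n₀ / γ)
  have hB1 : 1 ≤ B := le_max_left _ _
  have hKB : 2 * K * n₀ ≤ γ * B := by
    rw [mul_comm γ, ← div_le_iff₀ hγ]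
    exact le_max_right _ _
  have hτ : 0 < 1 - √(1 - γ) := by
    rw [sub_pos, Real.sqrt_lt' one_pos]
    linarith
  set δ : ℝ := (1 - √(1 - γ)) / (24 * n₀ * B) with hδdef
  have hδ0 : 0 < δ := by positivity
  have hδ : 24 * n₀ * (δ * B) = 1 - √(1 - γ) := by
    rw [hδdef]
    field_simp
  have hδB : δ * B ≤ 1 / 24 := by
    nlinarith [Real.sqrt_nonneg (1 - γ), mul_pos hδ0 (zero_lt_one.trans_le hB1)]
  refine ⟨δ, hδ0, fun n => ?_⟩
  have hS : AEStronglyMeasurable (partialSum X f n) μ :=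
    (BddMeas.sum _ fun j _ => (hf j).comp (hX.measurable j)).1.aestronglyMeasurable
  obtain ⟨L, hL0, hL, hLexp, hLbound⟩ := hX.exists_log_tailExpMoment hD hn₀ hγ
    (bddMeas_tailMean hf n) (fun j hj x => tailMean_of_le hj x) hB1
    (hD.tailMean_sub_le hn₀ hγ.le hf hK hK0 (zero_le_one.trans hB1) hKB n) hδB hδ.le
  simp only [tailExpMoment, ← Finset.range_eq_Ico, hX.sum_martingaleDiff_tailMean hf,
    variance_sub_const hS] at hLexp hLbound
  exact ⟨L, hL0, hL, hLexp, hLbound⟩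

end PartialSums

theorem log_characteristic_branch_derivative_bounds_general
    {Ω : Type*} [MeasurableSpace Ω] {𝒳 : ℕ → Type*} [∀ j, MeasurableSpace (𝒳 j)]
    (μ : Measure Ω) [IsProbabilityMeasure μ]
    (X : ∀ j, Ω → 𝒳 j) (P : ∀ j, Kernel (𝒳 j) (𝒳 (j + 1)))
    (hX : IsMarkovChain μ X P)
    (n₀ : ℕ) (hn₀ : 0 < n₀) (γ : ℝ) (hγ : 0 < γ)
    (m : ∀ j, Measure (𝒳 j)) (hm : ∀ j, IsProbabilityMeasure (m j))
    (hDoeblin : DoeblinMinorization P n₀ γ m)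
    (f : ∀ j, 𝒳 j → ℝ) (hf : ∀ j, Measurable (f j))
    (K : ℝ) (hK : ∀ j, ∀ᵐ ω ∂μ, |f j (X j ω)| ≤ K)
    (σ : ℕ → ℝ) (hσ : ∀ n, σ n = √(variance (partialSum X f n) μ)) :
    ∃ δ₀ : ℝ, 0 < δ₀ ∧ ∃ Λ : ℕ → ℝ → ℂ,
      (∀ n, Λ n 0 = 0) ∧
      (∀ n, ContDiffOn ℝ ((⊤ : ℕ∞) : WithTop ℕ∞) (Λ n) (Set.Ioo (-δ₀) δ₀)) ∧
      (∀ n, ∀ t ∈ Set.Ioo (-δ₀) δ₀,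
        Complex.exp (Λ n t) = centeredCharFun μ (partialSum X f n) t) ∧
      ∀ k : ℕ, ∃ δ C : ℝ, 0 < δ ∧ δ < δ₀ ∧ 0 < C ∧
        ∀ n s : ℕ, s ≤ k → ∀ t ∈ Set.Icc (-δ) δ,
          ‖iteratedDeriv s (Λ n) t‖ ≤ C * σ n ^ 2 := by
  obtain ⟨ω₀, hω₀⟩ := (hK 0).exists
  obtain ⟨F, hF, hFK, hSF⟩ :=
    exists_bddMeas_partialSum_ae_eq hf ((abs_nonneg _).trans hω₀) hK
  obtain ⟨δ₀, hδ₀, hlog⟩ := hX.exists_log_integral_cexp_partialSum hDoeblin hn₀ hγ hF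
    ((abs_nonneg _).trans hω₀) hFK
  choose L hL0 hL hLexp hLbound using hlog
  have hball : ∀ t ∈ Set.Ioo (-δ₀) δ₀, Complex.I * (t : ℂ) ∈ Metric.ball 0 δ₀ := fun t ht => by
    simpa [Metric.mem_ball] using abs_lt.2 ht
  refine ⟨δ₀, hδ₀, fun n t => L n (Complex.I * t), fun n => by simp [hL0], fun n =>
    (contDiffOn_comp_mul_ofReal Metric.isOpen_ball (hL n) Complex.I).mono hball,
    fun n t ht => ?_, fun k => ?_⟩
  · rw [hLexp n _ (hball t ht), ← centeredCharFun_congr (hSF n) t, centeredCharFun]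
  · obtain ⟨C, hC, hCk⟩ := exists_forall_norm_iteratedDeriv_comp_mul_ofReal_le
      (r := δ₀ / 2) (half_pos hδ₀) k
    refine ⟨δ₀ / 4, C * 3, by linarith, by linarith, by linarith, fun n s hs t ht => ?_⟩
    rw [hσ, Real.sq_sqrt (variance_nonneg _ _), ← variance_congr (hSF n), mul_assoc]
    rw [add_halves] at hCk
    exact hCk (L n) Complex.I _ Complex.norm_I.le (hL n) (hLbound n) s hs t
      ((abs_le.2 ht).trans_lt (by linarith))

theorem log_characteristic_branch_derivative_bounds
    {Ω : Type*} [MeasurableSpace Ω] {𝒳 : ℕ → Type*} [∀ j, MeasurableSpace (𝒳 j)]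
    (μ : Measure Ω) [IsProbabilityMeasure μ]
    (X : ∀ j, Ω → 𝒳 j) (P : ∀ j, Kernel (𝒳 j) (𝒳 (j + 1)))
    (hX : IsMarkovChain μ X P)
    (n₀ : ℕ) (hn₀ : 0 < n₀) (γ : ℝ) (hγ : γ ∈ Set.Ioo (0 : ℝ) 1)
    (m : ∀ j, Measure (𝒳 j)) (hm : ∀ j, IsProbabilityMeasure (m j))
    (hDoeblin : DoeblinMinorization P n₀ γ m)
    (f : ∀ j, 𝒳 j → ℝ) (hf : ∀ j, Measurable (f j))
    (K : ℝ) (hK : ∀ j, ∀ᵐ ω ∂μ, |f j (X j ω)| ≤ K)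
    (σ : ℕ → ℝ) (hσ : ∀ n, σ n = √(variance (partialSum X f n) μ))
    (hσ_top : Tendsto σ atTop atTop) :
    ∃ δ₀ : ℝ, 0 < δ₀ ∧ ∃ Λ : ℕ → ℝ → ℂ,
      (∀ n, Λ n 0 = 0) ∧
      (∀ n, ContDiffOn ℝ ((⊤ : ℕ∞) : WithTop ℕ∞) (Λ n) (Set.Ioo (-δ₀) δ₀)) ∧
      (∀ n, ∀ t ∈ Set.Ioo (-δ₀) δ₀,
        Complex.exp (Λ n t) = centeredCharFun μ (partialSum X f n) t) ∧
      ∀ k : ℕ, 3 ≤ k → ∃ δ C : ℝ, 0 < δ ∧ δ < δ₀ ∧ 0 < C ∧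
        ∀ n s : ℕ, s ≤ k → ∀ t ∈ Set.Icc (-δ) δ,
          ‖iteratedDeriv s (Λ n) t‖ ≤ C * σ n ^ 2 := by
  obtain ⟨δ₀, hδ₀, Λ, hΛ0, hΛ, hΛexp, hΛk⟩ := log_characteristic_branch_derivative_bounds_general μ
    X P hX n₀ hn₀ γ hγ.1 m hm hDoeblin f hf K hK σ hσ
  exact ⟨δ₀, hδ₀, Λ, hΛ0, hΛ, hΛexp, fun k _ => hΛk k⟩
end
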